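/- Let X ⊂ ℙ⁴ be an integral hypersurface over ℂ such that through a general point of X there pass only finitely many lines contained in X, and let d denote the number of such lines through a general point. Then d ≤ 6, and if d = 6 then X is a (not necessarily smooth) cubic hypersurface. -/

import Mathlib

/-!
Formalisation of statements from "The Fano surface of a smooth cubic threefold
is the unique surface of minimal cohomology class in its intermediate Jacobian"
(after Clemens–Griffiths, Debarre, Höring).

Notions that are not available in Mathlib (intermediate Jacobians, effective
algebraic cycles and their cohomology classes, Fano surfaces, Chow schemes, …)
are axiomatised by structures / parameters whose fields are documented below.
-/

noncomputable section

/-- Abstract formalism of effective algebraic cycles, with rational cohomology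
classes, on a principally polarised abelian variety (or on a semi-abelian rank
one degeneration of one).  The field `theta` is the cohomology class of the
principal polarisation `Θ`. -/
structure CycleTheory where
  /-- the points of the (semi-)abelian variety -/
  A : Type
  [instAddCommGroup : AddCommGroup A]
  /-- the rational cohomology ring (even degrees) in which cycle classes live -/
  H : Type
  [instCommRing : CommRing H]
  [instModule : Module ℚ H]
  /-- the class of the principal polarisation `Θ` -/
  theta : H
  /-- the effective algebraic cycles of dimension `d` -/
  Cyc : ℕ → Type
  /-- the cohomology class of an effective cycle -/
  cls : {d : ℕ} → Cyc d → H
  /-- the support of an effective cycle -/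
  supp : {d : ℕ} → Cyc d → Set A
  /-- the translate of an effective cycle by a point of `A` -/
  tr : {d : ℕ} → A → Cyc d → Cyc d
  /-- the image of an effective cycle under the inversion `x ↦ -x` -/
  neg : {d : ℕ} → Cyc d → Cyc d
  /-- integrality of an effective cycle: it is reduced and irreducible and
  occurs with multiplicity one -/
  IsIntegralCyc : {d : ℕ} → Cyc d → Prop

attribute [instance] CycleTheory.instAddCommGroup CycleTheory.instCommRing
  CycleTheory.instModule

/-- The minimal cohomology class `Θ^k / k!`. -/
def CycleTheory.minClass (T : CycleTheory) (k : ℕ) : T.H :=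
  ((Nat.factorial k : ℚ))⁻¹ • T.theta ^ k

/-- The algebra of polynomial functions on a complex vector space, generated by
the linear functionals. -/
def polyFuns (V : Type) [AddCommGroup V] [Module ℂ V] : Subalgebra ℂ (V → ℂ) :=
  Algebra.adjoin ℂ {l : V → ℂ | IsLinearMap ℂ l}

/-- The Zariski topology on a complex vector space: the topology generated by
the complements of zero sets of polynomial functions. -/
def zariskiVS (V : Type) [AddCommGroup V] [Module ℂ V] : TopologicalSpace V :=
  TopologicalSpace.generateFrom {U | ∃ g ∈ polyFuns V, U = {v | g v ≠ 0}}

/-- `U` is a dense (relatively) open subset of `T` for the topology `t`; a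
property holding on such a `U` holds *generically* on `T`. -/
def GenericInT {α : Type} (t : TopologicalSpace α) (T U : Set α) : Prop :=
  U ⊆ T ∧ (∃ W : Set α, t.IsOpen W ∧ U = T ∩ W) ∧
    ∀ W : Set α, t.IsOpen W → (T ∩ W).Nonempty → (U ∩ W).Nonempty

/-- Cubic forms in five variables, i.e. the space `H⁰(ℙ⁴, O(3))`; a nonzero
cubic form cuts out a cubic hypersurface `X ⊂ ℙ⁴`. -/
abbrev CubicForm : Type := MvPolynomial.homogeneousSubmodule (Fin 5) ℂ 3

/-- A cubic form defines a *smooth* cubic threefold iff it is nonzero and its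
partial derivatives have no common zero besides the origin. -/
def IsSmoothCubicForm (f : CubicForm) : Prop :=
  (f : MvPolynomial (Fin 5) ℂ) ≠ 0 ∧
    ∀ v : Fin 5 → ℂ,
      (∀ i : Fin 5, MvPolynomial.eval v
        (MvPolynomial.pderiv i (f : MvPolynomial (Fin 5) ℂ)) = 0) → v = 0

/-- The complex projective space `ℙ⁴`. -/
abbrev P4 : Type := Projectivization ℂ (Fin 5 → ℂ)

/-- The set of points of `ℙ⁴` lying in the projectivisation of a linear
subspace `W ⊆ ℂ⁵`. -/
def projSet (W : Submodule ℂ (Fin 5 → ℂ)) : Set P4 := {x | x.submodule ≤ W}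

/-- A line in `ℙ⁴`: the projectivisation of a two-dimensional linear
subspace of `ℂ⁵`. -/
def IsLine (L : Set P4) : Prop :=
  ∃ W : Submodule ℂ (Fin 5 → ℂ), Module.finrank ℂ W = 2 ∧ L = projSet W

/-- The projective zero locus in `ℙ⁴` of a (homogeneous) polynomial. -/
def zeroLocusP (f : MvPolynomial (Fin 5) ℂ) : Set P4 :=
  {x | ∀ v : Fin 5 → ℂ, v ∈ x.submodule → MvPolynomial.eval v f = 0}

/-- The Zariski topology on `ℙ⁴`. -/
def zariskiP4 : TopologicalSpace P4 :=
  TopologicalSpace.generateFrom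
    {U | ∃ (n : ℕ) (f : MvPolynomial (Fin 5) ℂ), f.IsHomogeneous n ∧ U = (zeroLocusP f)ᶜ}

/-- Two subsets of `ℙ⁴` are projectively equivalent if a linear automorphism
of `ℂ⁵` carries one onto the other. -/
def ProjEquiv (A B : Set P4) : Prop :=
  ∃ g : (Fin 5 → ℂ) ≃ₗ[ℂ] (Fin 5 → ℂ),
    Projectivization.map g.toLinearMap g.injective '' A = B

/-- `v ≠ 0` represents an ordinary double point of the projective hypersurface
`{f = 0} ⊂ ℙ⁴`: the point is singular and the Hessian of `f` at `v` has
maximal possible rank `4`. -/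
def IsODPAt (f : MvPolynomial (Fin 5) ℂ) (v : Fin 5 → ℂ) : Prop :=
  v ≠ 0 ∧ MvPolynomial.eval v f = 0 ∧
    (∀ i : Fin 5, MvPolynomial.eval v (MvPolynomial.pderiv i f) = 0) ∧
    (Matrix.of fun i j : Fin 5 =>
        MvPolynomial.eval v (MvPolynomial.pderiv i (MvPolynomial.pderiv j f))).rank = 4

/-- The cubic form `f` defines a cubic threefold with a *unique* ordinary
double point. -/
def HasUniqueODP (f : CubicForm) : Prop :=
  ∃ v : Fin 5 → ℂ, IsODPAt (f : MvPolynomial (Fin 5) ℂ) v ∧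
    ∀ w : Fin 5 → ℂ, w ≠ 0 →
      (∀ i : Fin 5, MvPolynomial.eval w
        (MvPolynomial.pderiv i (f : MvPolynomial (Fin 5) ℂ)) = 0) →
      ∃ c : ℂ, w = c • v

/-- The unit disc `Δ ⊂ ℂ`. -/
abbrev UnitDisc : Type := ↥(Metric.ball (0 : ℂ) 1)

/-- The origin `0 ∈ Δ`. -/
def d0 : UnitDisc := ⟨0, Metric.mem_ball_self one_pos⟩

/-!
Work at a generic point in the sense of Weil: choose `p₁, p₂, p₃ ∈ ℂ` algebraically independent over
the countable field generated by the coefficients involved, and commuting derivations `Dᵢ` of `ℂ`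
that kill this field, with `Dᵢ pⱼ = δᵢⱼ`. A root `y` of `f (·, 1, p)` gives the generic point
`(y, 1, p)` of `X`, near which `y` is a function of `p` whose Taylor terms are
`Tₖ = (∑ Xᵢ Dᵢ) ^ k y / k!`. A form vanishes on `X` as soon as its expansion along this germ is
zero. The lines on `X` through the point are given by the directions `u ∈ ℙ²` at which every
`Tₖ`, `k ≥ 2`, vanishes; in particular they lie on the conic `T₂ = 0` and on the cubic `T₃ = 0`.

If these two curves had a common component `h`, then `∂ₘ Tₖ₊₁ = Dₘ Tₖ` would show that `h` divides
every `Tₖ`, and there would be infinitely many lines. So there are at most six lines, and `T₂` is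
irreducible when there are six. In that case, the lowest-order terms of order `j` of the expansions
of cubic forms along the germ form spaces closed under differentiation, whose members vanish at the
six directions if `j ≥ 4`; for `j = 0, 1, 2, …` their dimensions are at most
`1, 3, 6, 10, 9, 4, 1, 0, 0, …`. These add up to `34`, but there are `35` independent cubic forms in
five variables, so some cubic form vanishes on `X` and `deg X ≤ 3`. In degree at most two,
the lines would be the points of the whole conic `T₂ = 0`.
-/

namespace GeneralLines

open MvPolynomial KaehlerDifferential
open scoped LinearAlgebra.Projectivization

/-! ### Commuting derivations dual to independent elements -/

section DerivationExtension

variable {k S K M : Type*} [CommRing k] [CommRing S] [CommRing K]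
  [Algebra k S] [Algebra k K] [Algebra S K] [IsScalarTower k S K] [Algebra.FormallyEtale S K]
  [AddCommGroup M] [Module k M] [Module S M] [Module K M]
  [IsScalarTower k S M] [IsScalarTower k K M] [IsScalarTower S K M]

theorem exists_derivation_extending (d : Derivation k S M) :
    ∃ D : Derivation k K M, ∀ a, D (algebraMap S K a) = d a := by
  have hb := isBaseChange_of_formallyEtale k S K
  refine ⟨(hb.lift d.liftKaehlerDifferential).compDer (KaehlerDifferential.D k K), fun a => ?_⟩
  have h := hb.lift_eq d.liftKaehlerDifferential (KaehlerDifferential.D k S a)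
  rw [KaehlerDifferential.map_D] at h
  simpa using h

theorem derivation_eq_zero_of_algebraMap {D : Derivation k K M}
    (h : ∀ a, D (algebraMap S K a) = 0) : D = 0 := by
  have hb := isBaseChange_of_formallyEtale k S K
  have hcomp : (D.liftKaehlerDifferential.restrictScalars S) ∘ₗ
      KaehlerDifferential.map k k S K = 0 := by
    refine Derivation.liftKaehlerDifferential_unique _ _ ?_
    ext a
    simpa using h a
  have hlift : D.liftKaehlerDifferential = 0 :=
    hb.algHom_ext _ _ fun x => LinearMap.congr_fun hcomp x
  rw [← D.liftKaehlerDifferential_comp, hlift]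
  ext
  rfl

end DerivationExtension

theorem formallyEtale_of_isTranscendenceBasis {k K ι : Type*} [Field k] [Field K] [CharZero K]
    [Algebra k K] [Algebra (MvPolynomial ι k) K] {x : ι → K} (hx : IsTranscendenceBasis k x)
    (h : ∀ a, algebraMap (MvPolynomial ι k) K a = aeval x a) :
    Algebra.FormallyEtale (MvPolynomial ι k) K := by
  have hinj : Function.Injective (algebraMap (MvPolynomial ι k) K) := by
    rw [funext h]
    exact hx.1
  have : FaithfulSMul (MvPolynomial ι k) K := (faithfulSMul_iff_algebraMap_injective _ _).2 hinj
  let F := FractionRing (MvPolynomial ι k)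
  let _ : Algebra F K := FractionRing.liftAlgebra _ K
  have hF : Algebra.FormallyEtale (MvPolynomial ι k) F :=
    Algebra.FormallyEtale.of_isLocalization (nonZeroDivisors (MvPolynomial ι k))
  have halg : Algebra.IsAlgebraic (MvPolynomial ι k) K := by
    have := hx.isAlgebraic
    refine Algebra.IsAlgebraic.of_ringHom_of_comp_eq hx.1.aevalEquiv.toRingEquiv (RingHom.id K)
      hx.1.aevalEquiv.surjective Function.injective_id ?_
    ext a <;> simp [h]
  have : Algebra.IsAlgebraic F K :=
    (IsFractionRing.comap_isAlgebraic_iff (A := MvPolynomial ι k) (K := F) (C := K)).1 halg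
  have : CharZero F := (algebraMap F K).charZero
  have hK : Algebra.FormallyEtale F K := Algebra.FormallyEtale.of_isSeparable F K
  exact Algebra.FormallyEtale.comp _ F K

/-- Commuting derivations of a field together with dual coordinates.  If the derivations kill the
subfield generated by the coefficients of some equations, then `p` plays the role of a generic
point in the sense of Weil, and `D i` that of `∂ / ∂ p i`. -/
structure Frame (K : Type*) [Field K] (m : ℕ) where
  /-- the derivations -/
  D : Fin m → Derivation ℤ K K
  /-- the dual coordinates -/
  p : Fin m → K
  D_p : ∀ i j, D i (p j) = if i = j then 1 else 0
  comm : ∀ i j a, D i (D j a) = D j (D i a)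

section ExistsFrame

variable {k K ι : Type*} [Field k] [Field K] [CharZero K] [Algebra k K]

theorem exists_derivation_of_isTranscendenceBasis [DecidableEq ι] {x : ι → K}
    (hx : IsTranscendenceBasis k x) :
    ∃ D : ι → Derivation k K K, (∀ i j, D i (x j) = if i = j then 1 else 0) ∧
      ∀ i j a, D i (D j a) = D j (D i a) := by
  let _ : Algebra (MvPolynomial ι k) K := (aeval x).toAlgebra
  have halg : ∀ a, algebraMap (MvPolynomial ι k) K a = aeval x a := fun _ => rfl
  have : IsScalarTower k (MvPolynomial ι k) K := .of_algebraMap_eq' (aeval x).comp_algebraMap.symm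
  have := formallyEtale_of_isTranscendenceBasis hx halg
  choose D hD using fun i => exists_derivation_extending (K := K)
    (mkDerivation k (fun j => if i = j then 1 else 0) : Derivation k (MvPolynomial ι k) K)
  have hDx : ∀ i j, D i (x j) = if i = j then 1 else 0 := fun i j => by
    simpa only [halg, aeval_X, mkDerivation_X] using hD i (X j)
  have hcomm : ∀ i j, ⁅D i, D j⁆ = 0 := fun i j => by
    refine derivation_eq_zero_of_algebraMap (S := MvPolynomial ι k) fun a => ?_
    suffices ⁅D i, D j⁆.compAlgebraMap (MvPolynomial ι k) = 0 from DFunLike.congr_fun this a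
    refine MvPolynomial.derivation_ext fun l => ?_
    simp only [Derivation.compAlgebraMap_apply, halg, aeval_X, Derivation.commutator_apply, hDx]
    split_ifs <;> simp
  refine ⟨D, hDx, fun i j a => ?_⟩
  simpa only [Derivation.commutator_apply, Derivation.coe_zero, Pi.zero_apply, sub_eq_zero]
    using DFunLike.congr_fun (hcomm i j) a

theorem exists_frame [IsAlgClosed K] (hK : Cardinal.aleph0 < Cardinal.mk K) (m : ℕ)
    {s : Set K} (hs : s.Countable) : ∃ F : Frame K m, ∀ i, ∀ a ∈ s, F.D i a = 0 := by
  classical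
  let k : Subfield K := Subfield.closure s
  have hk : Cardinal.mk k ≤ Cardinal.aleph0 :=
    (Subfield.cardinalMk_closure_le_max s).trans (max_le hs.le_aleph0 le_rfl)
  obtain ⟨ι, x, hx⟩ := exists_isTranscendenceBasis' k K
  have : Infinite ι := by
    rw [Cardinal.infinite_iff,
      ← IsAlgClosed.cardinal_eq_cardinal_transcendence_basis_of_aleph0_lt' x hx hk hK]
    exact hK.le
  let e : Fin m ↪ ι := Fin.valEmbedding.trans (Infinite.natEmbedding ι)
  obtain ⟨D, hDx, hcomm⟩ := exists_derivation_of_isTranscendenceBasis hx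
  exact ⟨⟨fun i => (D (e i)).restrictScalars ℤ, fun i => x (e i),
    fun i j => (hDx _ _).trans (by simp only [e.injective.eq_iff]), fun i j => hcomm _ _⟩,
    fun i a ha => (D (e i)).map_algebraMap (⟨a, Subfield.subset_closure ha⟩ : k)⟩

end ExistsFrame

/-! ### Formal Taylor expansion -/

section Coeffwise

variable {R σ : Type*} [CommRing R]

/-- A derivation of `R` acting on the coefficients of polynomials over `R`. -/
def coeffwise (D : Derivation ℤ R R) : Derivation ℤ (MvPolynomial σ R) (MvPolynomial σ R) :=
  Derivation.mk'
    (AddMonoidHom.toIntLinearMap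
      { toFun := AddMonoidAlgebra.map (D : R →+ R)
        map_zero' := by ext; exact D.map_zero
        map_add' := fun P Q => by ext m; exact D.map_add _ _ })
    fun P Q => by
      classical
      ext m
      change D (coeff m (P * Q)) = _
      simp only [smul_eq_mul, coeff_add, mul_comm Q, coeff_mul, map_sum, ← Finset.sum_add_distrib]
      refine Finset.sum_congr rfl fun x _ => ?_
      exact (D.leibniz _ _).trans (by rw [smul_eq_mul, smul_eq_mul, mul_comm (coeff x.2 Q)]; rfl)

variable (D : Derivation ℤ R R)

theorem coeff_coeffwise (m : σ →₀ ℕ) (P : MvPolynomial σ R) :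
    coeff m (coeffwise D P) = D (coeff m P) := rfl

theorem coeffwise_monomial (m : σ →₀ ℕ) (a : R) :
    coeffwise D (monomial m a) = monomial m (D a) := by
  classical
  ext l
  rw [coeff_coeffwise, coeff_monomial, coeff_monomial, apply_ite D, map_zero]

theorem coeffwise_C (a : R) : coeffwise D (C a : MvPolynomial σ R) = C (D a) :=
  coeffwise_monomial D 0 a

theorem coeffwise_X (i : σ) : coeffwise D (X i : MvPolynomial σ R) = 0 := by
  rw [X, coeffwise_monomial, D.map_one_eq_zero, monomial_zero]

theorem coeffwise_comm {D E : Derivation ℤ R R} (h : ∀ a, D (E a) = E (D a))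
    (P : MvPolynomial σ R) : coeffwise D (coeffwise E P) = coeffwise E (coeffwise D P) := by
  ext m
  simp only [coeff_coeffwise, h]

theorem pderiv_coeffwise (i : σ) (P : MvPolynomial σ R) :
    pderiv i (coeffwise D P) = coeffwise D (pderiv i P) := by
  ext m
  simp only [coeff_coeffwise, coeff_pderiv, D.leibniz, map_add, D.map_natCast, D.map_one_eq_zero,
    add_zero, smul_eq_mul, mul_zero, zero_add]
  exact mul_comm _ _

theorem isHomogeneous_coeffwise {P : MvPolynomial σ R} {n : ℕ} (h : P.IsHomogeneous n) :
    (coeffwise D P).IsHomogeneous n :=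
  fun _ hm => h fun h0 => hm (by rw [coeff_coeffwise, h0, map_zero])

end Coeffwise

namespace Frame

variable {K : Type*} [Field K] {m : ℕ} (F : Frame K m)

/-- The derivation `∑ i, X i * D i` along the universal direction `X`. -/
def xi : Derivation ℤ (MvPolynomial (Fin m) K) (MvPolynomial (Fin m) K) :=
  ∑ i, (X i : MvPolynomial (Fin m) K) • coeffwise (F.D i)

theorem xi_apply (P : MvPolynomial (Fin m) K) : F.xi P = ∑ i, X i * coeffwise (F.D i) P := by
  rw [xi, ← Derivation.coeFnAddMonoidHom_apply, map_sum, Finset.sum_apply]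
  rfl

theorem pderiv_xi (j : Fin m) (P : MvPolynomial (Fin m) K) :
    pderiv j (F.xi P) = coeffwise (F.D j) P + F.xi (pderiv j P) := by
  classical
  simp only [xi_apply, map_sum, pderiv_mul, Finset.sum_add_distrib, pderiv_X, pderiv_coeffwise,
    Pi.single_apply, ite_mul, one_mul, zero_mul, Finset.sum_ite_eq', Finset.mem_univ, if_true]

theorem coeffwise_xi (j : Fin m) (P : MvPolynomial (Fin m) K) :
    coeffwise (F.D j) (F.xi P) = F.xi (coeffwise (F.D j) P) := by
  simp only [xi_apply, map_sum, Derivation.leibniz, coeffwise_X, mul_zero, add_zero, smul_eq_mul,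
    coeffwise_comm (F.comm j _)]

theorem isHomogeneous_xi {P : MvPolynomial (Fin m) K} {n : ℕ} (h : P.IsHomogeneous n) :
    (F.xi P).IsHomogeneous (n + 1) := by
  rw [xi_apply, add_comm]
  exact IsHomogeneous.sum _ _ _ fun i _ => (isHomogeneous_X _ i).mul (isHomogeneous_coeffwise _ h)

/-- The term of degree `n` of the formal Taylor expansion of `a`, as a function of `p`. -/
def taylorTerm (a : K) : ℕ → MvPolynomial (Fin m) K
  | 0 => C a
  | n + 1 => C ((n + 1 : K)⁻¹) * F.xi (taylorTerm a n)

theorem isHomogeneous_taylorTerm (a : K) : ∀ n, (F.taylorTerm a n).IsHomogeneous n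
  | 0 => isHomogeneous_C _ _
  | n + 1 => (F.isHomogeneous_xi (isHomogeneous_taylorTerm a n)).C_mul _

theorem taylorTerm_add (a b : K) (n : ℕ) :
    F.taylorTerm (a + b) n = F.taylorTerm a n + F.taylorTerm b n := by
  induction n with
  | zero => exact C_add
  | succ n ih => simp only [taylorTerm, ih, map_add, mul_add]

theorem taylorTerm_one : ∀ n, F.taylorTerm 1 (n + 1) = 0
  | 0 => by rw [taylorTerm, taylorTerm, C_1, Derivation.map_one_eq_zero, mul_zero]
  | n + 1 => by rw [taylorTerm, taylorTerm_one n, map_zero, mul_zero]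

theorem taylorTerm_p_one (j : Fin m) : F.taylorTerm (F.p j) 1 = X j := by
  simp [taylorTerm, xi_apply, coeffwise_C, F.D_p]

theorem taylorTerm_p_add_two (j : Fin m) : ∀ n, F.taylorTerm (F.p j) (n + 2) = 0
  | 0 => by rw [taylorTerm, taylorTerm_p_one, xi_apply]; simp [coeffwise_X]
  | n + 1 => by rw [taylorTerm, taylorTerm_p_add_two j n, map_zero, mul_zero]

variable [CharZero K]

theorem xi_taylorTerm (a : K) (n : ℕ) :
    F.xi (F.taylorTerm a n) = (n + 1) • F.taylorTerm a (n + 1) := by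
  rw [taylorTerm, C_mul', ← Nat.cast_smul_eq_nsmul K, smul_smul, Nat.cast_succ,
    mul_inv_cancel₀ n.cast_add_one_ne_zero, one_smul]

theorem pderiv_taylorTerm_succ (a : K) (j : Fin m) (n : ℕ) :
    pderiv j (F.taylorTerm a (n + 1)) = coeffwise (F.D j) (F.taylorTerm a n) := by
  refine nsmul_right_injective n.succ_ne_zero ?_
  simp only
  rw [← map_nsmul, ← xi_taylorTerm, pderiv_xi]
  cases n with
  | zero => simp [taylorTerm]
  | succ n =>
    rw [pderiv_taylorTerm_succ a j n, ← coeffwise_xi, xi_taylorTerm, map_nsmul, ← succ_nsmul']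

open Finset.HasAntidiagonal in
/-- Both sides have the same constant term and are solutions of the differential equation
`(n + 1) c (n + 1) = ξ (c n)`. -/
theorem taylorTerm_mul (a b : K) (n : ℕ) : F.taylorTerm (a * b) n =
    ∑ x ∈ antidiagonal n, F.taylorTerm a x.1 * F.taylorTerm b x.2 := by
  induction n with
  | zero => simp [taylorTerm]
  | succ n ih =>
    refine nsmul_right_injective n.succ_ne_zero ?_
    have h1 : ∑ x ∈ antidiagonal (n + 1), x.1 • (F.taylorTerm a x.1 * F.taylorTerm b x.2) =
        ∑ x ∈ antidiagonal n, F.xi (F.taylorTerm a x.1) * F.taylorTerm b x.2 := by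
      rw [Finset.Nat.sum_antidiagonal_succ, zero_smul, zero_add]
      exact Finset.sum_congr rfl fun x _ => by rw [xi_taylorTerm, smul_mul_assoc]
    have h2 : ∑ x ∈ antidiagonal (n + 1), x.2 • (F.taylorTerm a x.1 * F.taylorTerm b x.2) =
        ∑ x ∈ antidiagonal n, F.taylorTerm a x.1 * F.xi (F.taylorTerm b x.2) := by
      rw [Finset.Nat.sum_antidiagonal_succ', zero_smul, zero_add]
      exact Finset.sum_congr rfl fun x _ => by rw [xi_taylorTerm, mul_smul_comm]
    calc (n + 1) • F.taylorTerm (a * b) (n + 1)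
        = ∑ x ∈ antidiagonal n, F.xi (F.taylorTerm a x.1 * F.taylorTerm b x.2) := by
          rw [← xi_taylorTerm, ih, map_sum]
      _ = ∑ x ∈ antidiagonal (n + 1), (x.1 + x.2) • (F.taylorTerm a x.1 * F.taylorTerm b x.2) := by
          simp only [add_smul, Finset.sum_add_distrib, h1, h2, Derivation.leibniz, smul_eq_mul]
          rw [add_comm]
          simp only [mul_comm]
      _ = (n + 1) • ∑ x ∈ antidiagonal (n + 1), F.taylorTerm a x.1 * F.taylorTerm b x.2 := by
          rw [Finset.smul_sum]
          exact Finset.sum_congr rfl fun x hx => by rw [mem_antidiagonal.1 hx]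

/-- Formal Taylor expansion of elements of `K` as functions of `p`; the power series variable
keeps track of the degree. -/
def taylor : K →+* PowerSeries (MvPolynomial (Fin m) K) where
  toFun a := PowerSeries.mk (F.taylorTerm a)
  map_zero' := PowerSeries.ext fun n => by
    simpa using F.taylorTerm_add 0 0 n
  map_one' := PowerSeries.ext fun
    | 0 => by simp [taylorTerm]
    | n + 1 => by simp [taylorTerm_one, PowerSeries.coeff_one]
  map_add' a b := PowerSeries.ext fun n => by
    simp only [map_add, PowerSeries.coeff_mk, taylorTerm_add]
  map_mul' a b := PowerSeries.ext fun n => by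
    simp only [PowerSeries.coeff_mul, PowerSeries.coeff_mk, taylorTerm_mul]

theorem coeff_taylor (a : K) (n : ℕ) : PowerSeries.coeff n (F.taylor a) = F.taylorTerm a n :=
  PowerSeries.coeff_mk _ _

theorem taylor_of_forall_eq_zero {a : K} (ha : ∀ i, F.D i a = 0) :
    F.taylor a = algebraMap K (PowerSeries (MvPolynomial (Fin m) K)) a := by
  have hsucc : ∀ n, F.taylorTerm a (n + 1) = 0 := fun n => by
    induction n with
    | zero => simp [taylorTerm, xi_apply, coeffwise_C, ha]
    | succ n ih => rw [taylorTerm, ih, map_zero, mul_zero]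
  ext1 n
  rw [coeff_taylor, PowerSeries.algebraMap_apply, PowerSeries.coeff_C]
  cases n with
  | zero => rfl
  | succ n => rw [hsucc, if_neg n.succ_ne_zero]

theorem taylor_p (j : Fin m) :
    F.taylor (F.p j) = PowerSeries.C (C (F.p j)) + PowerSeries.C (X j) * PowerSeries.X := by
  ext1 n
  rw [coeff_taylor]
  match n with
  | 0 => simp [taylorTerm]
  | 1 => simp [taylorTerm_p_one]
  | n + 2 => simp [taylorTerm_p_add_two]

section Jet

variable {σ : Type*} (v : σ → K)

/-- Expansion of a polynomial along the formal germ `taylor ∘ v` through the point `v`. -/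
def jet : MvPolynomial σ K →ₐ[K] PowerSeries (MvPolynomial (Fin m) K) :=
  aeval fun i => F.taylor (v i)

theorem jet_monomial (l : σ →₀ ℕ) (a : K) :
    F.jet v (monomial l a) = a • F.taylor (eval v (monomial l 1)) := by
  rw [jet, aeval_monomial, eval_monomial, one_mul, Algebra.smul_def, Finsupp.prod, Finsupp.prod,
    map_prod]
  simp only [map_pow]

theorem coeff_jet_monomial (l : σ →₀ ℕ) (a : K) (n : ℕ) : PowerSeries.coeff n (F.jet v
    (monomial l a)) = C a * F.taylorTerm (eval v (monomial l 1)) n := by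
  rw [jet_monomial, PowerSeries.coeff_smul, coeff_taylor, C_mul']

theorem isHomogeneous_coeff_jet (P : MvPolynomial σ K) (n : ℕ) :
    (PowerSeries.coeff n (F.jet v P)).IsHomogeneous n := by
  induction P using MvPolynomial.induction_on' with
  | monomial l a => exact coeff_jet_monomial F v l a n ▸ (F.isHomogeneous_taylorTerm _ n).C_mul a
  | add P Q hP hQ => rw [map_add, map_add]; exact hP.add hQ

theorem coeff_zero_jet (P : MvPolynomial σ K) :
    PowerSeries.coeff 0 (F.jet v P) = C (eval v P) := by
  induction P using MvPolynomial.induction_on' with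
  | monomial l a => rw [coeff_jet_monomial, taylorTerm, ← C_mul, ← smul_eval, smul_monomial,
      smul_eq_mul, mul_one]
  | add P Q hP hQ => simp only [map_add, hP, hQ]

theorem pderiv_coeff_jet (j : Fin m) (n : ℕ) (P : MvPolynomial σ K) :
    pderiv j (PowerSeries.coeff (n + 1) (F.jet v P)) =
      coeffwise (F.D j) (PowerSeries.coeff n (F.jet v P)) -
        PowerSeries.coeff n (F.jet v (coeffwise (F.D j) P)) := by
  induction P using MvPolynomial.induction_on' with
  | monomial l a =>
    rw [coeffwise_monomial, coeff_jet_monomial, coeff_jet_monomial, coeff_jet_monomial,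
      pderiv_C_mul, pderiv_taylorTerm_succ, Derivation.leibniz, coeffwise_C, smul_eq_mul,
      smul_eq_mul]
    ring
  | add P Q hP hQ => simp only [map_add, hP, hQ]; ring

/-- A polynomial all of whose coefficients are constants of the derivations of the frame. -/
def IsConst (P : MvPolynomial σ K) : Prop := ∀ i l, F.D i (coeff l P) = 0

theorem IsConst.jet_eq_taylor {P : MvPolynomial σ K} (hP : F.IsConst P) :
    F.jet v P = F.taylor (eval v P) := by
  rw [jet, aeval_def, eval₂_eq, eval_eq, map_sum]
  refine Finset.sum_congr rfl fun l _ => ?_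
  rw [map_mul, map_prod, taylor_of_forall_eq_zero F fun i => hP i l]
  simp only [map_pow]

end Jet

end Frame

section Homogeneous

variable {R σ : Type*} [CommSemiring R]

theorem eval_smul_of_isHomogeneous {P : MvPolynomial σ R} {n : ℕ} (h : P.IsHomogeneous n) (c : R)
    (v : σ → R) : eval (c • v) P = c ^ n * eval v P := by
  rw [eval_eq, eval_eq, Finset.mul_sum]
  refine Finset.sum_congr rfl fun l hl => ?_
  simp only [Pi.smul_apply, smul_eq_mul, mul_pow, Finset.prod_mul_distrib,
    Finset.prod_pow_eq_pow_sum, ← h.degree_eq_sum_deg_support hl]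
  exact mul_left_comm _ _ _

theorem eq_zero_of_forall_eval_cons_one_eq_zero {K : Type*} [Field K] [Infinite K] {m n : ℕ}
    {P : MvPolynomial (Fin (m + 1)) K} (h : P.IsHomogeneous n)
    (h0 : ∀ x : Fin m → K, eval (Fin.cons 1 x : Fin (m + 1) → K) P = 0) : P = 0 := by
  suffices X 0 * P = 0 from (mul_eq_zero.1 this).resolve_left (X_ne_zero 0)
  refine MvPolynomial.funext fun v => ?_
  rw [map_mul, eval_X, map_zero]
  rcases eq_or_ne (v 0) 0 with hv | hv
  · rw [hv, zero_mul]
  · have hcons : v = v 0 • (Fin.cons 1 ((v 0)⁻¹ • Fin.tail v) : Fin (m + 1) → K) := by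
      ext i
      refine Fin.cases ?_ (fun i => ?_) i <;> simp [hv, Fin.tail]
    rw [hcons, eval_smul_of_isHomogeneous h, h0, mul_zero, mul_zero]

end Homogeneous

/-! ### Lines on a hypersurface through a generic point -/

section LinePoly

variable {K σ : Type*}

/-- The polynomial parametrisation `t ↦ a + t • v` of the affine line through `a` with
direction `v`. -/
def linePoly [CommSemiring K] (a v : σ → K) : σ → Polynomial K :=
  fun i => Polynomial.C (a i) + Polynomial.C (v i) * Polynomial.X

theorem coe_aeval [CommSemiring K] (g : σ → Polynomial K) (P : MvPolynomial σ K) :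
    ((aeval g P : Polynomial K) : PowerSeries K) = aeval (fun i => (g i : PowerSeries K)) P :=
  comp_aeval_apply g (Polynomial.coeToPowerSeries.algHom K) P

theorem natDegree_aeval_linePoly_le [CommSemiring K] {P : MvPolynomial σ K} {n : ℕ}
    (hP : P.IsHomogeneous n) (a v : σ → K) : (aeval (linePoly a v) P).natDegree ≤ n := by
  refine (aeval_natDegree_le P hP.totalDegree_le _ (n := 1) fun i => ?_).trans n.mul_one.le
  rw [linePoly, add_comm]
  exact Polynomial.natDegree_linear_le

theorem polynomial_eval_aeval [CommSemiring K] (Γ : σ → Polynomial K) (t : K)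
    (P : MvPolynomial σ K) : (aeval Γ P).eval t = eval (fun i => (Γ i).eval t) P := by
  simp only [← Polynomial.coe_aeval_eq_eval, comp_aeval_apply, aeval_eq_eval]

theorem eval_aeval_linePoly [CommSemiring K] (a v : σ → K) (t : K) (P : MvPolynomial σ K) :
    Polynomial.eval t (aeval (linePoly a v) P) = eval (a + t • v) P := by
  rw [polynomial_eval_aeval]
  congr 2
  ext i
  simp [linePoly, mul_comm t]

variable [Field K] {P : MvPolynomial σ K} {n : ℕ}

theorem aeval_linePoly_eq_zero_iff [Infinite K] {a v : σ → K} :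
    aeval (linePoly a v) P = 0 ↔ ∀ t : K, eval (a + t • v) P = 0 := by
  simp only [← eval_aeval_linePoly]
  exact ⟨fun h t => by rw [h, Polynomial.eval_zero],
    fun h => Polynomial.funext fun t => by rw [h, Polynomial.eval_zero]⟩

theorem eval_add_smul_swap (h : P.IsHomogeneous n) (a v : σ → K) {t : K}
    (ht : t ≠ 0) : eval (a + t • v) P = t ^ n * eval (v + t⁻¹ • a) P := by
  rw [← eval_smul_of_isHomogeneous h, smul_add, smul_inv_smul₀ ht, add_comm]

theorem eval_eq_mul_zero_pow_of_forall_eval_add_smul_eq [Infinite K] (h : P.IsHomogeneous n)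
    {a v : σ → K} {c : K} (hc : ∀ t : K, eval (a + t • v) P = c) : eval v P = c * 0 ^ n := by
  have hpoly : aeval (linePoly v a) P = Polynomial.C c * Polynomial.X ^ n := by
    refine Polynomial.eq_of_infinite_eval_eq _ _ ((Set.finite_singleton 0).infinite_compl.mono ?_)
    intro s hs
    rw [Set.mem_ofPred_eq, eval_aeval_linePoly, eval_add_smul_swap h _ _ hs, hc]
    simp only [Polynomial.eval_mul, Polynomial.eval_C, Polynomial.eval_pow, Polynomial.eval_X]
    exact mul_comm _ _
  simpa [eval_aeval_linePoly] using congrArg (Polynomial.eval 0) hpoly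

theorem eval_smul_add_smul_eq_zero [Infinite K] (h : P.IsHomogeneous n) {a v : σ → K}
    (h0 : ∀ t : K, eval (a + t • v) P = 0) (s t : K) : eval (s • a + t • v) P = 0 := by
  by_cases hs : s = 0
  · rw [hs, zero_smul, zero_add, eval_smul_of_isHomogeneous h,
      eval_eq_mul_zero_pow_of_forall_eval_add_smul_eq h h0, zero_mul, mul_zero]
  · rw [← mul_inv_cancel_left₀ hs t, mul_smul, ← smul_add, eval_smul_of_isHomogeneous h, h0,
      mul_zero]

theorem exists_eval_add_smul_eq_zero [IsAlgClosed K] (h : P.IsHomogeneous n)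
    (hn : n ≠ 0) (a : σ → K) {v : σ → K} (hv : eval v P ≠ 0) : ∃ t : K, eval (a + t • v) P = 0 := by
  by_contra! hne
  have hconst : (aeval (linePoly a v) P).natDegree = 0 :=
    Polynomial.natDegree_eq_zero_iff_degree_le_zero.2 <| not_lt.1 fun hdeg => by
      obtain ⟨t, ht⟩ := IsAlgClosed.exists_root _ hdeg.ne'
      exact hne t (by rw [← eval_aeval_linePoly]; exact ht)
  obtain ⟨c, hc⟩ := Polynomial.natDegree_eq_zero.1 hconst
  refine hv ?_
  rw [eval_eq_mul_zero_pow_of_forall_eval_add_smul_eq h (a := a) (c := c) fun t => by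
    rw [← eval_aeval_linePoly, ← hc, Polynomial.eval_C], zero_pow hn, mul_zero]

end LinePoly

section Elimination

theorem exists_C_mem_span_pair {A : Type*} [CommRing A] [IsDomain A] [IsGCDMonoid A]
    {f g : Polynomial A} (hf : Irreducible f) (hdeg : f.natDegree ≠ 0) (hfg : ¬ f ∣ g) :
    ∃ r : A, r ≠ 0 ∧ Polynomial.C r ∈ Ideal.span {f, g} := by
  let K := FractionRing A
  have hprim := hf.isPrimitive hdeg
  have hirr : Irreducible (f.map (algebraMap A K)) :=
    hprim.irreducible_iff_irreducible_map_fraction_map.1 hf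
  have hnd : ¬ f.map (algebraMap A K) ∣ g.map (algebraMap A K) := fun h =>
    hfg (hprim.dvd_of_fraction_map_dvd_fraction_map h)
  obtain ⟨a, b, hab⟩ := hirr.coprime_iff_not_dvd.2 hnd
  obtain ⟨r, hr, ha⟩ := IsLocalization.integerNormalization_spec (nonZeroDivisors A) a
  obtain ⟨s, hs, hb⟩ := IsLocalization.integerNormalization_spec (nonZeroDivisors A) b
  refine ⟨r * s, mul_ne_zero (nonZeroDivisors.ne_zero hr) (nonZeroDivisors.ne_zero hs),
    Ideal.mem_span_pair.2
      ⟨Polynomial.C s * IsLocalization.integerNormalization (nonZeroDivisors A) a,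
        Polynomial.C r * IsLocalization.integerNormalization (nonZeroDivisors A) b, ?_⟩⟩
  apply Polynomial.map_injective _ (IsFractionRing.injective A K)
  simp only [Polynomial.map_add, Polynomial.map_mul, Polynomial.map_C, ha, hb,
    Algebra.smul_def, Polynomial.algebraMap_apply, map_mul]
  linear_combination (Polynomial.C (algebraMap A K r) * Polynomial.C (algebraMap A K s)) * hab

variable {K : Type*} [Field K] {m : ℕ} {f g : MvPolynomial (Fin (m + 1)) K}

theorem finSuccEquiv_rename_succ (r : MvPolynomial (Fin m) K) :
    finSuccEquiv K m (rename Fin.succ r) = Polynomial.C r := by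
  induction r using MvPolynomial.induction_on with
  | C a => simp [finSuccEquiv_apply]
  | add P Q hP hQ => simp only [map_add, hP, hQ]
  | mul_X P i hP => simp only [map_mul, hP, rename_X, finSuccEquiv_X_succ]

theorem exists_rename_succ_mem_span_pair (hf : Irreducible f) (hdeg : f.degreeOf 0 ≠ 0)
    (hfg : ¬ f ∣ g) :
    ∃ r : MvPolynomial (Fin m) K, r ≠ 0 ∧ rename Fin.succ r ∈ Ideal.span {f, g} := by
  let e := finSuccEquiv K m
  obtain ⟨r, hr, hmem⟩ := exists_C_mem_span_pair (f := e f) (g := e g)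
    ((MulEquiv.irreducible_iff e).2 hf) (natDegree_finSuccEquiv f ▸ hdeg)
    (fun h => hfg ((map_dvd_iff e).1 h))
  obtain ⟨a, b, hab⟩ := Ideal.mem_span_pair.1 hmem
  refine ⟨r, hr, Ideal.mem_span_pair.2 ⟨e.symm a, e.symm b, e.injective ?_⟩⟩
  rw [finSuccEquiv_rename_succ, ← hab]
  simp only [map_add, map_mul, AlgEquiv.apply_symm_apply]

theorem exists_isHomogeneous_rename_succ_mem_span_pair {n k : ℕ} (hf : f.IsHomogeneous n)
    (hg : g.IsHomogeneous k) (hirr : Irreducible f) (hdeg : f.degreeOf 0 ≠ 0) (hfg : ¬ f ∣ g) :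
    ∃ (r : MvPolynomial (Fin m) K) (d : ℕ), r.IsHomogeneous d ∧ r ≠ 0 ∧
      rename Fin.succ r ∈ Ideal.span {f, g} := by
  obtain ⟨r, hr, hmem⟩ := exists_rename_succ_mem_span_pair hirr hdeg hfg
  let _ := gradedAlgebra (σ := Fin (m + 1)) (R := K)
  have hhom : (Ideal.span {f, g}).IsHomogeneous (homogeneousSubmodule (Fin (m + 1)) K) :=
    Ideal.homogeneous_span _ _ (by rintro x (rfl | rfl); exacts [⟨n, hf⟩, ⟨k, hg⟩])
  obtain ⟨d, hd⟩ : ∃ d, homogeneousComponent d r ≠ 0 := by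
    by_contra! h
    exact hr (by rw [← sum_homogeneousComponent r, Finset.sum_eq_zero fun d _ => h d])
  refine ⟨_, d, homogeneousComponent_isHomogeneous d r, hd, ?_⟩
  rw [rename_homogeneousComponent]
  exact homogeneousComponent_mem_of_mem hhom hmem d

end Elimination

namespace Frame

variable {K : Type*} [Field K] [CharZero K] {m : ℕ} (F : Frame K m)

/-- The germ `taylor ∘ v` restricted to the direction `u`. -/
def germ {σ : Type*} (v : σ → K) (u : Fin m → K) : σ → PowerSeries K :=
  fun i => PowerSeries.map (eval u) (F.taylor (v i))

theorem coeff_germ {σ : Type*} (v : σ → K) (u : Fin m → K) (i : σ) (k : ℕ) :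
    PowerSeries.coeff k (F.germ v u i) = eval u (F.taylorTerm (v i) k) := by
  rw [germ, PowerSeries.coeff_map, coeff_taylor]

theorem aeval_germ {σ : Type*} (v : σ → K) (u : Fin m → K) (P : MvPolynomial σ K) :
    aeval (F.germ v u) P = PowerSeries.map (eval u) (F.jet v P) := by
  have hmap : (PowerSeries.map (eval u)).comp
      (algebraMap K (PowerSeries (MvPolynomial (Fin m) K))) = algebraMap K (PowerSeries K) := by
    ext1 c
    simp [PowerSeries.algebraMap_apply]
  rw [jet, map_aeval, hmap]
  rfl

theorem germ_p (u : Fin m → K) (j : Fin m) :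
    F.germ F.p u j = (linePoly F.p u j : PowerSeries K) := by
  simp [germ, taylor_p, linePoly]

theorem eq_zero_of_jet_cons_one {P : MvPolynomial (Fin (m + 1)) K} {n : ℕ}
    (h : P.IsHomogeneous n) (h0 : F.jet (Fin.cons 1 F.p : Fin (m + 1) → K) P = 0) : P = 0 := by
  refine eq_zero_of_forall_eval_cons_one_eq_zero h fun x => ?_
  let a : Fin (m + 1) → K := Fin.cons 1 F.p
  let v : Fin (m + 1) → K := Fin.cons 0 (x - F.p)
  have hline : F.germ a (x - F.p) = fun i => (linePoly a v i : PowerSeries K) :=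
    funext <| Fin.cases (by simp [a, v, germ, linePoly]) (F.germ_p (x - F.p))
  have hzero : aeval (linePoly a v) P = 0 := by
    rw [← Polynomial.coe_eq_zero_iff, coe_aeval, ← hline, aeval_germ, h0, map_zero]
  have hpt : (Fin.cons 1 x : Fin (m + 1) → K) = a + (1 : K) • v := by
    ext i
    refine Fin.cases ?_ (fun j => ?_) i <;> simp [a, v]
  rw [hpt, ← eval_aeval_linePoly, hzero, Polynomial.eval_zero]

/-- The point `(y : 1 : p)`, generic on the hypersurfaces over the constants containing it. -/
def pt (y : K) : Fin (m + 2) → K := Fin.cons y (Fin.cons 1 F.p)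

/-- If `f ∤ P`, eliminating the first variable gives a nonzero form `r` in the other variables
whose jet vanishes, contradicting the independence of the coordinates `p`. -/
theorem dvd_of_jet_eq_zero {y : K} {f P : MvPolynomial (Fin (m + 2)) K} {n k : ℕ}
    (hf : f.IsHomogeneous n) (hP : P.IsHomogeneous k) (hirr : Irreducible f)
    (hdeg : f.degreeOf 0 ≠ 0) (hf0 : F.jet (F.pt y) f = 0) (hP0 : F.jet (F.pt y) P = 0) :
    f ∣ P := by
  by_contra hnd
  obtain ⟨r, d, hd, hr, hmem⟩ :=
    exists_isHomogeneous_rename_succ_mem_span_pair hf hP hirr hdeg hnd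
  refine hr (F.eq_zero_of_jet_cons_one hd ?_)
  obtain ⟨a, b, hab⟩ := Ideal.mem_span_pair.1 hmem
  have hrename : F.jet (F.pt y) (rename Fin.succ r) = 0 := by
    rw [← hab, map_add, map_mul, map_mul, hf0, hP0, mul_zero, mul_zero, add_zero]
  rw [jet, aeval_rename] at hrename
  exact hrename

end Frame

section AevalPerturbation

variable {R S σ : Type*} [CommRing R] [CommRing S] [Algebra R S] {c c' : σ → S}

theorem aeval_sub_aeval_mem {I : Ideal S} (h : ∀ i, c' i - c i ∈ I) (P : MvPolynomial σ R) :
    aeval c' P - aeval c P ∈ I := by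
  rw [← Ideal.Quotient.mk_eq_mk_iff_sub_mem, ← Ideal.Quotient.mkₐ_eq_mk R, comp_aeval_apply,
    comp_aeval_apply]
  congr 2
  exact funext fun i => (Ideal.Quotient.mk_eq_mk_iff_sub_mem _ _).2 (h i)

theorem exists_aeval_eq_add_pderiv_mul {i : σ} (h : ∀ j, j ≠ i → c' j = c j)
    (P : MvPolynomial σ R) : ∃ k, aeval c' P =
      aeval c P + aeval c (pderiv i P) * (c' i - c i) + k * (c' i - c i) ^ 2 := by
  induction P using MvPolynomial.induction_on with
  | C a => exact ⟨0, by simp⟩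
  | add P Q hP hQ =>
    obtain ⟨k, hk⟩ := hP
    obtain ⟨l, hl⟩ := hQ
    refine ⟨k + l, ?_⟩
    simp only [map_add, hk, hl]
    ring
  | mul_X P j hP =>
    obtain ⟨k, hk⟩ := hP
    rcases eq_or_ne j i with rfl | hj
    · refine ⟨aeval c (pderiv j P) + k * c' j, ?_⟩
      simp only [map_mul, hk, pderiv_mul, pderiv_X_self, map_add, aeval_X, mul_one]
      ring
    · refine ⟨k * c j, ?_⟩
      simp only [map_mul, hk, pderiv_mul, pderiv_X_of_ne hj, aeval_X, h j hj, mul_zero, add_zero]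
      ring

end AevalPerturbation

/-- The direction `(w : 0 : u)` at a point of the chart where the second coordinate is `1`. -/
def dir {K : Type*} [Zero K] {m : ℕ} (w : K) (u : Fin m → K) : Fin (m + 2) → K :=
  Fin.cons w (Fin.cons 0 u)

namespace Frame

variable {K : Type*} [Field K] [CharZero K] {m : ℕ} (F : Frame K m) {y w : K} {u : Fin m → K}
  {f : MvPolynomial (Fin (m + 2)) K}

/-- Some line through `F.pt y` contained in `f = 0` has direction `u` after projection from the
first coordinate point. -/
def IsLineDir (y : K) (f : MvPolynomial (Fin (m + 2)) K) (u : Fin m → K) : Prop :=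
  ∃ w, ∀ t : K, eval (F.pt y + t • dir w u) f = 0

theorem germ_pt_of_ne_zero (y w : K) (u : Fin m → K) {i : Fin (m + 2)} (hi : i ≠ 0) :
    F.germ (F.pt y) u i = (linePoly (F.pt y) (dir w u) i : PowerSeries K) := by
  obtain ⟨i, rfl⟩ := Fin.exists_succ_eq.2 hi
  refine Fin.cases ?_ (F.germ_p u) i
  simp [germ, pt, dir, linePoly]

theorem coeff_linePoly_sub_germ (y w : K) (u : Fin m → K) (k : ℕ) :
    PowerSeries.coeff k ((linePoly (F.pt y) (dir w u) 0 : PowerSeries K) -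
      F.germ (F.pt y) u 0) =
        if k = 0 then 0 else if k = 1 then w - eval u (F.taylorTerm y 1)
          else -eval u (F.taylorTerm y k) := by
  rw [map_sub, coeff_germ]
  match k with
  | 0 => simp [linePoly, pt, taylorTerm]
  | 1 => simp [linePoly, pt, dir]
  | k + 2 => simp [linePoly, pt, dir]

theorem isLineDir_of_taylorTerm {n : ℕ} (hf : F.jet (F.pt y) f = 0) (hhom : f.IsHomogeneous n)
    (h : ∀ k, 2 ≤ k → k ≤ n → eval u (F.taylorTerm y k) = 0) : F.IsLineDir y f u := by
  let w := eval u (F.taylorTerm y 1)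
  let ℓ := linePoly (F.pt y) (dir w u)
  have hcongr : ∀ i, (ℓ i : PowerSeries K) - F.germ (F.pt y) u i ∈
      Ideal.span {(PowerSeries.X : PowerSeries K) ^ (n + 1)} := fun i => by
    rcases eq_or_ne i 0 with rfl | hi
    · refine Ideal.mem_span_singleton.2 (PowerSeries.X_pow_dvd_iff.2 fun k hk => ?_)
      rw [coeff_linePoly_sub_germ]
      split_ifs with h0 h1
      · rfl
      · exact sub_self _
      · rw [h k (by omega) (by omega), neg_zero]
    · rw [F.germ_pt_of_ne_zero _ _ _ hi, sub_self]
      exact Ideal.zero_mem _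
  have hdvd := Ideal.mem_span_singleton.1 (aeval_sub_aeval_mem hcongr f)
  rw [aeval_germ, hf, map_zero, sub_zero, ← coe_aeval, PowerSeries.X_pow_dvd_iff] at hdvd
  refine ⟨w, aeval_linePoly_eq_zero_iff.1 (Polynomial.ext fun k => ?_)⟩
  rcases lt_or_ge k (n + 1) with hk | hk
  · simpa using hdvd k hk
  · exact Polynomial.coeff_eq_zero_of_natDegree_lt
      ((natDegree_aeval_linePoly_le hhom _ _).trans_lt hk)

section SmoothPoint

variable (hf : F.jet (F.pt y) f = 0) (h0 : eval (F.pt y) (pderiv 0 f) ≠ 0)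
include hf h0

/-- The first coordinate of a point of `f = 0` near `F.pt y` is a function of the others. -/
theorem germ_pt_eq_linePoly (h : ∀ t : K, eval (F.pt y + t • dir w u) f = 0) :
    F.germ (F.pt y) u = fun i => (linePoly (F.pt y) (dir w u) i : PowerSeries K) := by
  funext i
  rcases eq_or_ne i 0 with rfl | hi
  swap
  · exact F.germ_pt_of_ne_zero _ _ _ hi
  let δ := (linePoly (F.pt y) (dir w u) 0 : PowerSeries K) - F.germ (F.pt y) u 0
  obtain ⟨k, hk⟩ := exists_aeval_eq_add_pderiv_mul
    (c' := fun i => (linePoly (F.pt y) (dir w u) i : PowerSeries K))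
    (fun i hi => (F.germ_pt_of_ne_zero y w u hi).symm) f
  rw [← coe_aeval, aeval_linePoly_eq_zero_iff.2 h, aeval_germ, aeval_germ, hf, map_zero,
    Polynomial.coe_zero] at hk
  have hmul : (PowerSeries.map (eval u) (F.jet (F.pt y) (pderiv 0 f)) + k * δ) * δ = 0 := by
    linear_combination -hk
  refine (sub_eq_zero.1 ((mul_eq_zero.1 hmul).resolve_left fun hz => h0 ?_)).symm
  have hδ : PowerSeries.constantCoeff δ = 0 :=
    (PowerSeries.coeff_zero_eq_constantCoeff_apply δ).symm.trans (F.coeff_linePoly_sub_germ y w u 0)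
  have hz0 := congrArg (PowerSeries.coeff 0) hz
  rw [map_add, PowerSeries.coeff_map, coeff_zero_jet, eval_C] at hz0
  simpa [hδ] using hz0

theorem eq_eval_taylorTerm_one (h : ∀ t : K, eval (F.pt y + t • dir w u) f = 0) :
    w = eval u (F.taylorTerm y 1) := by
  have := F.coeff_linePoly_sub_germ y w u 1
  rw [F.germ_pt_eq_linePoly hf h0 h, sub_self, map_zero] at this
  exact (sub_eq_zero.1 this.symm)

theorem IsLineDir.eval_taylorTerm_eq_zero (h : F.IsLineDir y f u) {k : ℕ} (hk : 2 ≤ k) :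
    eval u (F.taylorTerm y k) = 0 := by
  obtain ⟨w, hw⟩ := h
  have := F.coeff_linePoly_sub_germ y w u k
  rw [F.germ_pt_eq_linePoly hf h0 hw, sub_self, map_zero, if_neg (by omega), if_neg (by omega),
    zero_eq_neg] at this
  exact this

theorem IsLineDir.eval_coeff_jet_eq_zero (h : F.IsLineDir y f u)
    {P : MvPolynomial (Fin (m + 2)) K} {n k : ℕ} (hP : P.IsHomogeneous n) (hk : n < k) :
    eval u (PowerSeries.coeff k (F.jet (F.pt y) P)) = 0 := by
  obtain ⟨w, hw⟩ := h
  rw [← PowerSeries.coeff_map, ← aeval_germ, F.germ_pt_eq_linePoly hf h0 hw, ← coe_aeval,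
    Polynomial.coeff_coe]
  exact Polynomial.coeff_eq_zero_of_natDegree_lt
    ((natDegree_aeval_linePoly_le hP _ _).trans_lt hk)

end SmoothPoint

end Frame

/-! ### Plane conics and forms vanishing on them -/

section HomogeneousDivisibility

variable {σ K : Type*} [Field K]

theorem homogeneousComponent_mul_left {h : MvPolynomial σ K} {e : ℕ} (hh : h.IsHomogeneous e)
    (τ : MvPolynomial σ K) (k : ℕ) :
    homogeneousComponent (e + k) (h * τ) = h * homogeneousComponent k τ := by
  have hterm (i : ℕ) : homogeneousComponent (e + k) (h * homogeneousComponent i τ) =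
      if k = i then h * homogeneousComponent k τ else 0 := by
    rw [homogeneousComponent_of_mem ((mem_homogeneousSubmodule _ _).2
      (hh.mul (homogeneousComponent_isHomogeneous i τ)))]
    grind
  conv_lhs => rw [← sum_homogeneousComponent τ, Finset.mul_sum, map_sum]
  simp only [hterm, Finset.sum_ite_eq, Finset.mem_range, ite_eq_left_iff, not_lt]
  intro hk
  rw [homogeneousComponent_eq_zero k τ (by omega), mul_zero]

theorem exists_isHomogeneous_eq_mul {h P : MvPolynomial σ K} {e k : ℕ} (hh : h.IsHomogeneous e)
    (hP : P.IsHomogeneous (e + k)) (hd : h ∣ P) :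
    ∃ τ : MvPolynomial σ K, τ.IsHomogeneous k ∧ P = h * τ := by
  obtain ⟨τ, rfl⟩ := hd
  refine ⟨homogeneousComponent k τ, homogeneousComponent_isHomogeneous k τ, ?_⟩
  rw [← homogeneousComponent_mul_left hh, homogeneousComponent_eq_self hP]

theorem le_of_dvd_of_isHomogeneous {h P : MvPolynomial σ K} {e k : ℕ} (hh : h.IsHomogeneous e)
    (hP : P.IsHomogeneous k) (hP0 : P ≠ 0) (hd : h ∣ P) : e ≤ k := by
  obtain ⟨τ, rfl⟩ := hd
  have hdeg := totalDegree_mul_of_isDomain (left_ne_zero_of_mul hP0) (right_ne_zero_of_mul hP0)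
  rw [hP.totalDegree hP0, hh.totalDegree (left_ne_zero_of_mul hP0)] at hdeg
  omega

theorem eq_C_of_isHomogeneous_zero {P : MvPolynomial σ K} (hP : P.IsHomogeneous 0) :
    ∃ a, P = C a :=
  ⟨_, totalDegree_eq_zero_iff_eq_C.1 (Nat.le_zero.1 hP.totalDegree_le)⟩

theorem eq_zero_of_isUnit_of_isHomogeneous {P : MvPolynomial σ K} {m : ℕ}
    (hP : P.IsHomogeneous m) (hu : IsUnit P) : m = 0 := by
  rw [← hP.totalDegree hu.ne_zero, (isUnit_iff_totalDegree_of_isReduced.1 hu).2]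

theorem prime_of_isHomogeneous_one {P : MvPolynomial σ K} (hP : P.IsHomogeneous 1)
    (h0 : P ≠ 0) : Prime P := by
  refine Irreducible.prime (irreducible_of_totalDegree_eq_one (hP.totalDegree h0) fun x hx => ?_)
  rw [isUnit_iff_ne_zero]
  rintro rfl
  exact h0 (MvPolynomial.ext _ _ fun m => by simpa using hx m)

theorem dvd_of_dvd_pderiv [CharZero K] [Finite σ] {g P : MvPolynomial σ K} {m : ℕ}
    (hP : P.IsHomogeneous (m + 1)) (h : ∀ i, g ∣ pderiv i P) : g ∣ P := by
  have := Fintype.ofFinite σ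
  have hunit : IsUnit (C ((m + 1 : ℕ) : K) : MvPolynomial σ K) :=
    (IsUnit.mk0 _ (Nat.cast_ne_zero.2 m.succ_ne_zero)).map C
  rw [← hunit.dvd_mul_left, map_natCast, ← nsmul_eq_mul, ← hP.sum_X_mul_pderiv]
  exact Finset.dvd_sum fun i _ => (h i).mul_left _

theorem eq_zero_of_forall_pderiv_eq_zero [CharZero K] [Finite σ] {P : MvPolynomial σ K} {m : ℕ}
    (hP : P.IsHomogeneous (m + 1)) (h : ∀ i, pderiv i P = 0) : P = 0 :=
  zero_dvd_iff.1 (dvd_of_dvd_pderiv hP fun i => zero_dvd_iff.2 (h i))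

theorem totalDegree_ne_zero_of_not_isUnit {P : MvPolynomial σ K} (h0 : P ≠ 0)
    (hu : ¬ IsUnit P) : P.totalDegree ≠ 0 := fun h => by
  rw [totalDegree_eq_zero_iff_eq_C] at h
  refine hu (h ▸ (IsUnit.mk0 _ fun hc => h0 ?_).map C)
  rw [h, hc, C_0]

theorem exists_eq_mul_of_not_irreducible {q : MvPolynomial σ K} (hq : q.IsHomogeneous 2)
    (h0 : q ≠ 0) (hirr : ¬ Irreducible q) :
    ∃ l l' : MvPolynomial σ K, l.IsHomogeneous 1 ∧ l'.IsHomogeneous 1 ∧ q = l * l' := by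
  obtain ⟨a, b, rfl, ha, hb⟩ : ∃ a b, q = a * b ∧ ¬ IsUnit a ∧ ¬ IsUnit b := by
    simpa [irreducible_iff, mt (eq_zero_of_isUnit_of_isHomogeneous hq) two_ne_zero] using hirr
  have ha0 := left_ne_zero_of_mul h0
  have hb0 := right_ne_zero_of_mul h0
  have hdeg := totalDegree_mul_of_isDomain ha0 hb0
  rw [hq.totalDegree h0] at hdeg
  have hda := totalDegree_ne_zero_of_not_isUnit ha0 ha
  have hdb := totalDegree_ne_zero_of_not_isUnit hb0 hb
  refine ⟨_, _, homogeneousComponent_isHomogeneous 1 a, homogeneousComponent_isHomogeneous 1 b, ?_⟩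
  have hsum := sum_homogeneousComponent a
  rw [show a.totalDegree = 1 by omega, Finset.sum_range_succ, Finset.sum_range_one] at hsum
  have hcomp₀ := homogeneousComponent_mul_left (homogeneousComponent_isHomogeneous 0 a) b 2
  rw [homogeneousComponent_eq_zero 2 b (by omega), mul_zero, zero_add] at hcomp₀
  have hcomp₁ := homogeneousComponent_mul_left (homogeneousComponent_isHomogeneous 1 a) b 1
  calc a * b = homogeneousComponent 2 (a * b) := (homogeneousComponent_eq_self hq).symm
    _ = homogeneousComponent 2 (homogeneousComponent 0 a * b) +
          homogeneousComponent 2 (homogeneousComponent 1 a * b) := by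
        rw [← map_add, ← add_mul, hsum]
    _ = homogeneousComponent 1 a * homogeneousComponent 1 b := by rw [hcomp₀, hcomp₁, zero_add]

end HomogeneousDivisibility

theorem eval_aeval {R σ τ : Type*} [CommSemiring R] (c : σ → MvPolynomial τ R) (x : τ → R)
    (P : MvPolynomial σ R) : eval x (aeval c P) = eval (fun i => eval x (c i)) P :=
  comp_aeval_apply c (aeval x) P

section LinearForms

variable {σ K : Type*} [Fintype σ] [DecidableEq σ] [Field K]

/-- The linear form, as a polynomial, of a linear functional on `K ^ σ`. -/
def linForm (φ : (σ → K) →ₗ[K] K) : MvPolynomial σ K :=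
  ∑ i, C (φ (Pi.single i 1)) * X i

theorem eval_linForm (φ : (σ → K) →ₗ[K] K) (x : σ → K) : eval x (linForm φ) = φ x := by
  conv_rhs => rw [pi_eq_sum_univ' x, map_sum]
  simp only [linForm, map_sum, map_mul, eval_C, eval_X, map_smul, smul_eq_mul, mul_comm]

theorem isHomogeneous_linForm (φ : (σ → K) →ₗ[K] K) : (linForm φ).IsHomogeneous 1 :=
  IsHomogeneous.sum _ _ _ fun _ _ => isHomogeneous_C_mul_X _ _

theorem linForm_eq_zero_iff {φ : (σ → K) →ₗ[K] K} : linForm φ = 0 ↔ φ = 0 := by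
  refine ⟨fun h => LinearMap.ext fun x => ?_, fun h => by simp [linForm, h]⟩
  rw [← eval_linForm, h, map_zero, LinearMap.zero_apply]

theorem exists_eq_linForm [Infinite K] {P : MvPolynomial σ K} (hP : P.IsHomogeneous 1) :
    ∃ φ, P = linForm φ := by
  choose a ha using fun i => eq_C_of_isHomogeneous_zero (hP.pderiv (i := i))
  refine ⟨∑ i, a i • LinearMap.proj i, MvPolynomial.funext fun x => ?_⟩
  have heuler := hP.sum_X_mul_pderiv
  rw [one_smul] at heuler
  rw [eval_linForm, ← heuler]
  simp [ha, mul_comm]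

theorem linForm_dvd [Infinite K] {φ : (σ → K) →ₗ[K] K} (hφ : φ ≠ 0) {P : MvPolynomial σ K}
    (hP : ∀ x, φ x = 0 → eval x P = 0) : linForm φ ∣ P := by
  obtain ⟨w, hw⟩ : ∃ w, φ w = 1 := LinearMap.surjective hφ 1
  have hmem := aeval_sub_aeval_mem (I := Ideal.span {linForm φ})
    (c := fun i => X i - linForm φ * C (w i)) (c' := X)
    (fun i => by simpa using Ideal.mul_mem_right _ _ (Ideal.mem_span_singleton_self _)) P
  have hzero : aeval (fun i => X i - linForm φ * C (w i)) P = 0 := by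
    refine MvPolynomial.funext fun x => ?_
    have hproj : (fun i => eval x (X i - linForm φ * C (w i))) = x - φ x • w := by
      ext i
      simp [eval_linForm]
    rw [eval_aeval, hproj, map_zero, hP _ (by simp [hw])]
  rwa [hzero, sub_zero, aeval_X_left_apply, Ideal.mem_span_singleton] at hmem

end LinearForms

section PlaneCurves

variable {K : Type*} [Field K]

theorem eval_rep_mk_eq_zero_iff {σ : Type*} {P : MvPolynomial σ K} {n : ℕ}
    (hP : P.IsHomogeneous n) {v : σ → K} (hv : v ≠ 0) :
    eval (Projectivization.mk K v hv).rep P = 0 ↔ eval v P = 0 := by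
  obtain ⟨a, ha⟩ := Projectivization.exists_smul_eq_mk_rep K v hv
  rw [← ha, Units.smul_def, eval_smul_of_isHomogeneous hP, mul_eq_zero_iff_left]
  exact pow_ne_zero _ a.ne_zero

theorem exists_basis_of_linearIndependent_pair {a b : Fin 3 → K}
    (h : LinearIndependent K ![a, b]) :
    ∃ B : Module.Basis (Fin 3) K (Fin 3 → K), B 0 = a ∧ B 1 = b := by
  obtain ⟨w, hw⟩ := exists_linearIndependent_snoc_of_lt_finrank h (by simp)
  refine ⟨basisOfLinearIndependentOfCardEqFinrank hw (by simp), ?_, ?_⟩ <;>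
    rw [coe_basisOfLinearIndependentOfCardEqFinrank] <;> rfl

theorem exists_basis_of_ne_zero {a : Fin 3 → K} (ha : a ≠ 0) :
    ∃ B : Module.Basis (Fin 3) K (Fin 3 → K), B 0 = a := by
  obtain ⟨b, hb⟩ := exists_linearIndependent_pair_of_one_lt_finrank
    (show 1 < Module.finrank K (Fin 3 → K) by simp) ha
  exact (exists_basis_of_linearIndependent_pair hb).imp fun B hB => hB.1

theorem exists_ne_zero_and_eval_ne_zero {σ : Type*} [Nonempty σ] [Infinite K]
    {P : MvPolynomial σ K} {n : ℕ} (hP : P.IsHomogeneous n) (hn : n ≠ 0) :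
    ∃ v : σ → K, v ≠ 0 ∧ (P ≠ 0 → eval v P ≠ 0) := by
  by_cases h0 : P = 0
  · exact ⟨1, one_ne_zero, fun h => absurd h0 h⟩
  obtain ⟨v, hv⟩ : ∃ v, eval v P ≠ 0 := by
    by_contra! hc
    exact h0 (MvPolynomial.funext fun x => by rw [hc, map_zero])
  refine ⟨v, ?_, fun _ => hv⟩
  rintro rfl
  have hsmul := eval_smul_of_isHomogeneous hP 0 0
  rw [smul_zero, zero_pow hn, zero_mul] at hsmul
  exact hv hsmul

theorem infinite_setOf_eval_rep_eq_zero [IsAlgClosed K] {h : MvPolynomial (Fin 3) K} {e : ℕ}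
    (hh : h.IsHomogeneous e) (he : e ≠ 0) :
    {u : ℙ K (Fin 3 → K) | eval u.rep h = 0}.Infinite := by
  obtain ⟨v, hv0, hv⟩ := exists_ne_zero_and_eval_ne_zero hh he
  obtain ⟨B, hB⟩ := exists_basis_of_ne_zero hv0
  have hroot (a : Fin 3 → K) : ∃ l : K, eval (a + l • v) h = 0 := by
    by_cases h0 : h = 0
    · exact ⟨0, by rw [h0, map_zero]⟩
    · exact exists_eval_add_smul_eq_zero hh he a (hv h0)
  choose l hl using hroot
  let z (t : K) : Fin 3 → K := (B 1 + t • B 2) + l (B 1 + t • B 2) • v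
  have hz₁ (t : K) : B.repr (z t) 1 = 1 := by simp [z, ← hB]
  have hz₂ (t : K) : B.repr (z t) 2 = t := by simp [z, ← hB]
  have hz (t : K) : z t ≠ 0 := fun h => by simpa [h] using hz₁ t
  refine Set.infinite_of_injective_forall_mem (f := fun t => Projectivization.mk K (z t) (hz t))
    (fun s t hst => ?_) fun t => (eval_rep_mk_eq_zero_iff hh (hz t)).2 (hl _)
  obtain ⟨c, hc⟩ := (Projectivization.mk_eq_mk_iff' K _ _ _ _).1 hst
  have hc₁ : c = 1 := by simpa [hz₁] using congrArg (B.repr · 1) hc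
  simpa [hz₂, hc₁] using congrArg (B.repr · 2) hc.symm

theorem eq_of_rep_eq_smul_rep {V : Type*} [AddCommGroup V] [Module K V] {u v : ℙ K V} {a : K}
    (h : u.rep = a • v.rep) : u = v := by
  rw [← u.mk_rep, ← v.mk_rep]
  exact (Projectivization.mk_eq_mk_iff' K _ _ _ _).2 ⟨a, h.symm⟩

theorem linearIndependent_rep_of_ne {V : Type*} [AddCommGroup V] [Module K V] {u v : ℙ K V}
    (h : u ≠ v) : LinearIndependent K ![u.rep, v.rep] := by
  have hind := Projectivization.independent_iff.1
    ((Projectivization.independent_pair_iff_ne u v).2 h)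
  rwa [show Projectivization.rep ∘ ![u, v] = ![u.rep, v.rep] by ext i; fin_cases i <;> rfl] at hind

end PlaneCurves

section Polar

variable {σ K : Type*} [Fintype σ] [Field K]

/-- The derivative in the direction `b`; applied to a form, it gives the first polar of the form
with respect to the point `b`. -/
def polar (b : σ → K) : Derivation K (MvPolynomial σ K) (MvPolynomial σ K) :=
  ∑ i, b i • pderiv i

theorem polar_apply (b : σ → K) (P : MvPolynomial σ K) :
    polar b P = ∑ i, C (b i) * pderiv i P := by
  simp only [← smul_eq_C_mul]
  rw [polar, ← Derivation.coeFnAddMonoidHom_apply, map_sum, Finset.sum_apply]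
  rfl

theorem isHomogeneous_polar {P : MvPolynomial σ K} {n : ℕ} (hP : P.IsHomogeneous n)
    (b : σ → K) : (polar b P).IsHomogeneous (n - 1) := by
  rw [polar_apply]
  exact IsHomogeneous.sum _ _ _ fun i _ => hP.pderiv.C_mul (b i)

theorem polar_linForm [DecidableEq σ] (b : σ → K) (φ : (σ → K) →ₗ[K] K) :
    polar b (linForm φ) = C (φ b) := by
  rw [← eval_linForm]
  simp [polar_apply, linForm, pderiv_X, Pi.single_apply, mul_comm]

theorem eval_add_smul_of_isHomogeneous_two [Infinite K] {q : MvPolynomial σ K}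
    (hq : q.IsHomogeneous 2) (v b : σ → K) (t : K) :
    eval (v + t • b) q = eval v q + t * eval v (polar b q) + t ^ 2 * eval b q := by
  classical
  rw [← mem_homogeneousSubmodule, ← homogeneousSubmodule_one_pow, pow_two] at hq
  induction hq using Submodule.mul_induction_on' with
  | mem_mul_mem l hl l' hl' =>
    obtain ⟨φ, rfl⟩ := exists_eq_linForm hl
    obtain ⟨ψ, rfl⟩ := exists_eq_linForm hl'
    simp only [Derivation.leibniz, polar_linForm, map_mul, map_add, map_smul, eval_linForm,
      smul_eq_mul, eval_C]
    ring
  | add P _ Q _ hP hQ =>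
    simp only [map_add, hP, hQ]
    ring

end Polar

section Conics

variable {K : Type*} [Field K] {q : MvPolynomial (Fin 3) K}

theorem not_linForm_dvd_of_irreducible (hq : q.IsHomogeneous 2) (hirr : Irreducible q)
    (φ : (Fin 3 → K) →ₗ[K] K) : ¬ linForm φ ∣ q := by
  intro hd
  obtain ⟨τ, hτ, rfl⟩ := exists_isHomogeneous_eq_mul (k := 1) (isHomogeneous_linForm φ) hq hd
  rcases hirr.isUnit_or_isUnit rfl with h | h
  · exact one_ne_zero (eq_zero_of_isUnit_of_isHomogeneous (isHomogeneous_linForm φ) h)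
  · exact one_ne_zero (eq_zero_of_isUnit_of_isHomogeneous hτ h)

/-- Two conjugate points of a conic span a line contained in the conic. -/
theorem eval_polar_ne_zero [Infinite K] (hq : q.IsHomogeneous 2) (hirr : Irreducible q)
    {u v : ℙ K (Fin 3 → K)} (huv : u ≠ v) (hu : eval u.rep q = 0) (hv : eval v.rep q = 0) :
    eval v.rep (polar u.rep q) ≠ 0 := by
  intro h0
  have hind := linearIndependent_rep_of_ne huv
  obtain ⟨B, hB₀, hB₁⟩ := exists_basis_of_linearIndependent_pair hind
  have hcoord : B.coord 2 ≠ 0 := fun h => by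
    simpa using LinearMap.congr_fun h (B 2)
  refine not_linForm_dvd_of_irreducible hq hirr _ (linForm_dvd hcoord fun x hx => ?_)
  have hx' : x = B.repr x 1 • v.rep + B.repr x 0 • u.rep := by
    rw [Module.Basis.coord_apply] at hx
    conv_lhs => rw [← B.sum_repr x, Fin.sum_univ_three, hB₀, hB₁, hx]
    module
  rw [hx', eval_add_smul_of_isHomogeneous_two hq, eval_smul_of_isHomogeneous hq,
    eval_smul_of_isHomogeneous (isHomogeneous_polar hq _), hu, hv, h0]
  ring

theorem exists_eval_pderiv_ne_zero [IsAlgClosed K] (hq : q.IsHomogeneous 2)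
    (hirr : Irreducible q) {u : ℙ K (Fin 3 → K)} (hu : eval u.rep q = 0) :
    ∃ i, eval u.rep (pderiv i q) ≠ 0 := by
  obtain ⟨v, hv, hvu⟩ := (infinite_setOf_eval_rep_eq_zero hq two_ne_zero).exists_notMem_finset {u}
  by_contra! h
  refine eval_polar_ne_zero hq hirr (fun h => hvu (by simp [h])) hv hu ?_
  simp [polar_apply, h]

end Conics

section Parametrisation

variable {K : Type*} [Field K]

/-- `Γ` parametrises, with degree `e`, a rational curve on which no forms vanish but the multiples
of `h`, and which passes through all the points of `S`. -/
structure IsParam (h : MvPolynomial (Fin 3) K) (e : ℕ) (Γ : Fin 3 → Polynomial K)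
    (S : Finset (ℙ K (Fin 3 → K))) : Prop where
  natDegree_le : ∀ i, (Γ i).natDegree ≤ e
  dvd_of_aeval : ∀ {P : MvPolynomial (Fin 3) K} {m : ℕ}, P.IsHomogeneous m → aeval Γ P = 0 → h ∣ P
  exists_eq : ∀ u ∈ S, ∃ s c : K, u.rep = c • fun i => (Γ i).eval s

theorem aeval_mul_X_of_isHomogeneous {σ : Type*} [Infinite K] {P : MvPolynomial σ K} {m : ℕ}
    (hP : P.IsHomogeneous m) (L : MvPolynomial σ K) :
    aeval (fun i => L * X i) P = L ^ m * P := by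
  refine MvPolynomial.funext fun x => ?_
  simp only [eval_aeval, map_mul, eval_X, map_pow, ← eval_smul_of_isHomogeneous hP]
  rfl

theorem exists_projection [Infinite K] {c : ℙ K (Fin 3 → K)} {S : Finset (ℙ K (Fin 3 → K))}
    (hc : c ∉ S) : ∃ (ψ : (Fin 3 → K) →ₗ[K] K) (z a : Fin 3 → K), ψ ≠ 0 ∧
      (∀ u ∈ S, ψ u.rep ≠ 0) ∧
      ∀ v, ψ v ≠ 0 → ∃ s t : K, v = ψ v • (z + s • a) + t • c.rep := by
  classical
  obtain ⟨B, hB⟩ := exists_basis_of_ne_zero c.rep_nonzero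
  have hexpand (v : Fin 3 → K) : v = B.repr v 0 • c.rep + B.repr v 1 • B 1 + B.repr v 2 • B 2 := by
    conv_lhs => rw [← B.sum_repr v, Fin.sum_univ_three, hB]
  obtain ⟨τ, hτ⟩ := Infinite.exists_notMem_finset
    (S.image fun u => -(B.repr u.rep 1 / B.repr u.rep 2))
  refine ⟨B.coord 1 + τ • B.coord 2, B 1, B 2 - τ • B 1, fun h => ?_, fun u hu h => ?_,
    fun v hv => ⟨B.repr v 2 / (B.coord 1 + τ • B.coord 2) v, B.repr v 0, ?_⟩⟩
  · simpa using LinearMap.congr_fun h (B 1)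
  · replace h : B.repr u.rep 1 + τ * B.repr u.rep 2 = 0 := by simpa using h
    by_cases h₂ : B.repr u.rep 2 = 0
    · rw [h₂, mul_zero, add_zero] at h
      have hu' := hexpand u.rep
      rw [h, h₂, zero_smul, zero_smul, add_zero, add_zero] at hu'
      exact hc (eq_of_rep_eq_smul_rep hu' ▸ hu)
    · refine hτ (Finset.mem_image.2 ⟨u, hu, ?_⟩)
      field_simp
      linear_combination -h
  · have hs : (B.coord 1 + τ • B.coord 2) v = B.repr v 1 + τ * B.repr v 2 := by simp
    rw [smul_add, smul_smul, mul_div_cancel₀ _ hv, hs]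
    conv_lhs => rw [hexpand v]
    module

theorem isParam_of_projection [Infinite K] {h L : MvPolynomial (Fin 3) K} (hh : Prime h)
    (hL : ¬ h ∣ L) {G : Fin 3 → MvPolynomial (Fin 3) K} {e : ℕ} (hG : ∀ i, (G i).IsHomogeneous e)
    (hGL : ∀ i, h ∣ G i - L * X i) {c : ℙ K (Fin 3 → K)}
    (hGc : ∀ i v (t : K), eval (v + t • c.rep) (G i) = eval v (G i))
    {S : Finset (ℙ K (Fin 3 → K))} (hc : c ∉ S)
    (hS : ∀ u ∈ S, eval u.rep h = 0 ∧ eval u.rep L ≠ 0) : ∃ Γ, IsParam h e Γ S := by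
  obtain ⟨ψ, z, a, hψ, hSψ, hψv⟩ := exists_projection hc
  have hGΓ (v) (hv : ψ v ≠ 0) : ∃ s, (fun i => eval v (G i)) =
      ψ v ^ e • fun i => (aeval (linePoly z a) (G i)).eval s := by
    obtain ⟨s, t, hst⟩ := hψv v hv
    refine ⟨s, funext fun i => ?_⟩
    conv_lhs => rw [hst, hGc, eval_smul_of_isHomogeneous (hG i), ← eval_aeval_linePoly]
    rfl
  refine ⟨fun i => aeval (linePoly z a) (G i),
    fun i => natDegree_aeval_linePoly_le (hG i) z a, fun {P m} hP h0 => ?_, fun u hu => ?_⟩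
  · have hzero : linForm ψ * aeval G P = 0 := by
      refine MvPolynomial.funext fun v => ?_
      rw [map_mul, eval_linForm, eval_aeval, map_zero, mul_eq_zero, or_iff_not_imp_left]
      intro hv
      obtain ⟨s, hs⟩ := hGΓ v hv
      rw [hs, eval_smul_of_isHomogeneous hP, ← polynomial_eval_aeval, h0, Polynomial.eval_zero,
        mul_zero]
    have hmem := aeval_sub_aeval_mem (I := Ideal.span {h}) (c := fun i => L * X i) (c' := G)
      (fun i => Ideal.mem_span_singleton.2 (hGL i)) P
    rw [(mul_eq_zero.1 hzero).resolve_left (linForm_eq_zero_iff.not.2 hψ), zero_sub,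
      Ideal.mem_span_singleton, dvd_neg, aeval_mul_X_of_isHomogeneous hP] at hmem
    exact (hh.dvd_or_dvd hmem).resolve_left fun hd => hL (hh.dvd_of_dvd_pow hd)
  · obtain ⟨hu₀, huL⟩ := hS u hu
    obtain ⟨s, hs⟩ := hGΓ u.rep (hSψ u hu)
    refine ⟨s, (eval u.rep L)⁻¹ * ψ u.rep ^ e, ?_⟩
    rw [← smul_smul, ← hs]
    ext i
    obtain ⟨r, hr⟩ := hGL i
    have hGu : eval u.rep (G i) = eval u.rep L * u.rep i := by
      simpa [hu₀, sub_eq_zero] using congrArg (eval u.rep) hr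
    rw [Pi.smul_apply, hGu, smul_eq_mul, inv_mul_cancel_left₀ huL]

theorem exists_isParam_linForm [Infinite K] {χ : (Fin 3 → K) →ₗ[K] K} (hχ : χ ≠ 0)
    {S : Finset (ℙ K (Fin 3 → K))} (hS : ∀ u ∈ S, χ u.rep = 0) :
    ∃ Γ, IsParam (linForm χ) 1 Γ S := by
  obtain ⟨c, hc⟩ : ∃ c : ℙ K (Fin 3 → K), χ c.rep ≠ 0 := by
    by_contra! hall
    refine hχ (LinearMap.ext fun v => ?_)
    by_cases hv : v = 0
    · rw [hv, map_zero, map_zero]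
    · rw [LinearMap.zero_apply, ← eval_linForm,
        ← eval_rep_mk_eq_zero_iff (isHomogeneous_linForm χ) hv, eval_linForm, hall]
  have hprime := prime_of_isHomogeneous_one (isHomogeneous_linForm χ) (linForm_eq_zero_iff.not.2 hχ)
  have hunit : IsUnit (C (χ c.rep) : MvPolynomial (Fin 3) K) := (IsUnit.mk0 _ hc).map C
  refine isParam_of_projection hprime (fun hd => hprime.not_isUnit (isUnit_of_dvd_unit hd hunit))
    (G := fun i => C (χ c.rep) * X i - C (c.rep i) * linForm χ) (fun i => ?_)
    (fun i => ⟨-C (c.rep i), by ring⟩) (fun i v t => ?_) (fun hcS => hc (hS c hcS)) fun u hu => ?_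
  · exact ((isHomogeneous_X K i).C_mul _).sub ((isHomogeneous_linForm χ).C_mul _)
  · simp only [map_sub, map_mul, eval_C, eval_X, eval_linForm, map_add, map_smul, Pi.add_apply,
      Pi.smul_apply, smul_eq_mul]
    ring
  · exact ⟨by rw [eval_linForm, hS u hu], by rwa [eval_C]⟩

/-- The conic is projected from one of its points `b`. -/
theorem exists_isParam_conic [IsAlgClosed K] {q : MvPolynomial (Fin 3) K} (hq : q.IsHomogeneous 2)
    (hirr : Irreducible q) {S : Finset (ℙ K (Fin 3 → K))} (hS : ∀ u ∈ S, eval u.rep q = 0) :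
    ∃ Γ, IsParam q 2 Γ S := by
  obtain ⟨b, hb, hbS⟩ := (infinite_setOf_eval_rep_eq_zero hq two_ne_zero).exists_notMem_finset S
  obtain ⟨z, hz, hzb⟩ := (infinite_setOf_eval_rep_eq_zero hq two_ne_zero).exists_notMem_finset {b}
  have hL := isHomogeneous_polar hq b.rep
  have hL₀ : polar b.rep q ≠ 0 := fun h0 => by
    refine eval_polar_ne_zero hq hirr (fun h => hzb ?_) hb hz (by rw [h0, map_zero])
    rw [h, Finset.mem_singleton]
  have hbb : eval b.rep (polar b.rep q) = 0 := by
    have hself := eval_add_smul_of_isHomogeneous_two hq b.rep b.rep 1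
    rw [one_smul, ← two_smul K b.rep, eval_smul_of_isHomogeneous hq,
      show eval b.rep q = 0 from hb] at hself
    simpa using hself.symm
  refine isParam_of_projection hirr.prime (L := polar b.rep q) (fun hd => ?_)
    (G := fun i => polar b.rep q * X i - C (b.rep i) * q) (fun i => ?_)
    (fun i => ⟨-C (b.rep i), by ring⟩) (fun i v t => ?_) hbS fun u hu => ⟨hS u hu, ?_⟩
  · have := le_of_dvd_of_isHomogeneous hq hL hL₀ hd
    omega
  · exact (hL.mul (isHomogeneous_X K i)).sub (hq.C_mul _)
  · have hlin : eval (v + t • b.rep) (polar b.rep q) = eval v (polar b.rep q) := by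
      obtain ⟨φ, hφ⟩ := exists_eq_linForm hL
      rw [hφ, eval_linForm] at hbb
      rw [hφ, eval_linForm, map_add, map_smul, hbb, smul_zero, add_zero, eval_linForm]
    simp only [map_sub, map_mul, eval_C, eval_X, hlin, eval_add_smul_of_isHomogeneous_two hq,
      show eval b.rep q = 0 from hb, Pi.add_apply, Pi.smul_apply, smul_eq_mul]
    ring
  · exact eval_polar_ne_zero hq hirr (fun h => hbS (h ▸ hu)) hb (hS u hu)

theorem derivative_aeval {σ : Type*} [Fintype σ] (Γ : σ → Polynomial K) (P : MvPolynomial σ K) :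
    Polynomial.derivative (aeval Γ P) =
      ∑ i, aeval Γ (pderiv i P) * Polynomial.derivative (Γ i) := by
  classical
  induction P using MvPolynomial.induction_on with
  | C a => simp
  | add P Q hP hQ => simp only [map_add, hP, hQ, add_mul, Finset.sum_add_distrib]
  | mul_X P j hP =>
    simp only [Derivation.leibniz, pderiv_X, smul_eq_mul, map_add, map_mul, aeval_X, add_mul,
      Finset.sum_add_distrib, Polynomial.derivative_mul, hP, Finset.sum_mul, Pi.single_apply,
      apply_ite (aeval Γ), map_zero, mul_ite, mul_one, mul_zero, ite_mul, zero_mul,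
      Finset.sum_ite_eq, Finset.mem_univ, if_true]
    rw [add_comm]
    exact congrArg₂ _ rfl (Finset.sum_congr rfl fun i _ => by ring)

theorem IsParam.exists_params {h : MvPolynomial (Fin 3) K} {e : ℕ} {Γ : Fin 3 → Polynomial K}
    {S : Finset (ℙ K (Fin 3 → K))} (hΓ : IsParam h e Γ S) :
    ∃ T : Finset K, T.card = S.card ∧ ∀ t ∈ T, ∀ {P : MvPolynomial (Fin 3) K} {m : ℕ},
      P.IsHomogeneous m → (∀ u ∈ S, eval u.rep P = 0) → (aeval Γ P).eval t = 0 := by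
  classical
  choose! s c hsc using hΓ.exists_eq
  have hc (u) (hu : u ∈ S) : c u ≠ 0 := fun h0 =>
    u.rep_nonzero (by rw [hsc u hu, h0, zero_smul])
  refine ⟨S.image s, Finset.card_image_of_injOn fun u hu v hv huv =>
    eq_of_rep_eq_smul_rep (a := c u * (c v)⁻¹) ?_, ?_⟩
  · rw [hsc u hu, hsc v hv, smul_smul, inv_mul_cancel_right₀ (hc v hv), huv]
  · intro t ht P m hP h0
    obtain ⟨u, hu, rfl⟩ := Finset.mem_image.1 ht
    have hu0 := h0 u hu
    rw [hsc u hu, eval_smul_of_isHomogeneous hP] at hu0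
    rw [polynomial_eval_aeval]
    exact (mul_eq_zero.1 hu0).resolve_left (pow_ne_zero _ (hc u hu))

section IsParam

variable {h : MvPolynomial (Fin 3) K} {e : ℕ} {Γ : Fin 3 → Polynomial K}
  {S : Finset (ℙ K (Fin 3 → K))} {P : MvPolynomial (Fin 3) K} {m : ℕ}

theorem IsParam.natDegree_aeval_le (hΓ : IsParam h e Γ S) (hP : P.IsHomogeneous m) :
    (aeval Γ P).natDegree ≤ m * e :=
  MvPolynomial.aeval_natDegree_le P hP.totalDegree_le _ hΓ.natDegree_le

theorem IsParam.dvd (hΓ : IsParam h e Γ S) (hP : P.IsHomogeneous m)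
    (h0 : ∀ u ∈ S, eval u.rep P = 0) (hcard : m * e < S.card) : h ∣ P := by
  obtain ⟨T, hT, hT0⟩ := hΓ.exists_params
  exact hΓ.dvd_of_aeval hP <| Polynomial.eq_zero_of_natDegree_lt_card_of_eval_eq_zero' _ T
    (fun t ht => hT0 t ht hP h0) <| (hΓ.natDegree_aeval_le hP).trans_lt (hT ▸ hcard)

theorem IsParam.dvd_of_pderiv (hΓ : IsParam h e Γ S) (hP : P.IsHomogeneous m)
    (h0 : ∀ u ∈ S, eval u.rep P = 0) (h1 : ∀ i, ∀ u ∈ S, eval u.rep (pderiv i P) = 0)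
    (hcard : m * e < 2 * S.card) : h ∣ P := by
  obtain ⟨T, hT, hT0⟩ := hΓ.exists_params
  refine hΓ.dvd_of_aeval hP ?_
  by_contra hne
  have hdvd : ∏ t ∈ T, (Polynomial.X - Polynomial.C t) ^ 2 ∣ aeval Γ P := by
    refine Finset.prod_dvd_of_coprime (fun s _ t _ hst => ?_) fun t ht => ?_
    · exact (Polynomial.isCoprime_X_sub_C_of_isUnit_sub (sub_ne_zero.2 hst).isUnit).pow
    · rw [← Polynomial.le_rootMultiplicity_iff hne]
      refine (Polynomial.one_lt_rootMultiplicity_iff_isRoot hne).2 ⟨hT0 t ht hP h0, ?_⟩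
      rw [derivative_aeval, Polynomial.IsRoot.def, Polynomial.eval_finsetSum]
      refine Finset.sum_eq_zero fun i _ => ?_
      rw [Polynomial.eval_mul, hT0 t ht hP.pderiv (h1 i), zero_mul]
  have hdeg := Polynomial.natDegree_le_of_dvd hdvd hne
  rw [Polynomial.natDegree_prod _ _ fun t _ => pow_ne_zero _ (Polynomial.X_sub_C_ne_zero t)] at hdeg
  simp only [Polynomial.natDegree_pow, Polynomial.natDegree_X_sub_C, Finset.sum_const,
    smul_eq_mul] at hdeg
  have := hΓ.natDegree_aeval_le hP
  omega

theorem linForm_dvd_of_card [Infinite K] {χ : (Fin 3 → K) →ₗ[K] K} (hχ : χ ≠ 0)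
    (hS : ∀ u ∈ S, χ u.rep = 0) (hP : P.IsHomogeneous m) (h0 : ∀ u ∈ S, eval u.rep P = 0)
    (hcard : m < S.card) : linForm χ ∣ P := by
  obtain ⟨Γ, hΓ⟩ := exists_isParam_linForm hχ hS
  exact hΓ.dvd hP h0 (by omega)

theorem conic_dvd_of_card [IsAlgClosed K] {q : MvPolynomial (Fin 3) K} (hq : q.IsHomogeneous 2)
    (hirr : Irreducible q) (hS : ∀ u ∈ S, eval u.rep q = 0) (hP : P.IsHomogeneous m)
    (h0 : ∀ u ∈ S, eval u.rep P = 0) (hcard : 2 * m < S.card) : q ∣ P := by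
  obtain ⟨Γ, hΓ⟩ := exists_isParam_conic hq hirr hS
  exact hΓ.dvd hP h0 (by omega)

theorem conic_dvd_of_pderiv [IsAlgClosed K] {q : MvPolynomial (Fin 3) K} (hq : q.IsHomogeneous 2)
    (hirr : Irreducible q) (hS : ∀ u ∈ S, eval u.rep q = 0) (hP : P.IsHomogeneous m)
    (h0 : ∀ u ∈ S, eval u.rep P = 0) (h1 : ∀ i, ∀ u ∈ S, eval u.rep (pderiv i P) = 0)
    (hcard : m < S.card) : q ∣ P := by
  obtain ⟨Γ, hΓ⟩ := exists_isParam_conic hq hirr hS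
  exact hΓ.dvd_of_pderiv hP h0 h1 (by omega)

end IsParam

end Parametrisation

section CommonComponents

variable {K : Type*} [Field K]

theorem exists_rep_mem_ker_inf_ker (φ ψ : (Fin 3 → K) →ₗ[K] K) :
    ∃ ν : ℙ K (Fin 3 → K), φ ν.rep = 0 ∧ ψ ν.rep = 0 := by
  obtain ⟨v, hv, hv0⟩ := Submodule.exists_mem_ne_zero_of_ne_bot
    (LinearMap.ker_ne_bot_of_finrank_lt (f := φ.prod ψ) (by simp))
  obtain ⟨hφ, hψ⟩ : φ v = 0 ∧ ψ v = 0 := by simpa using hv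
  refine ⟨.mk K v hv0, ?_⟩
  simp only [← eval_linForm, eval_rep_mk_eq_zero_iff (isHomogeneous_linForm _)]
  exact ⟨by rwa [eval_linForm], by rwa [eval_linForm]⟩

theorem linForm_dvd_or_linForm_dvd_of_card [Infinite K] {φ ψ : (Fin 3 → K) →ₗ[K] K} (hφ : φ ≠ 0)
    (hψ : ψ ≠ 0) {P : MvPolynomial (Fin 3) K} {m : ℕ} (hP : P.IsHomogeneous m)
    (hν : ∀ ν, φ ν = 0 → ψ ν = 0 → eval ν P = 0) {S : Finset (ℙ K (Fin 3 → K))}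
    (hS : ∀ u ∈ S, φ u.rep = 0 ∨ ψ u.rep = 0) (h0 : ∀ u ∈ S, eval u.rep P = 0)
    (hcard : 2 * m ≤ S.card) : linForm φ ∣ P ∨ linForm ψ ∣ P := by
  classical
  obtain ⟨ν, hνφ, hνψ⟩ := exists_rep_mem_ker_inf_ker φ ψ
  let A (χ : (Fin 3 → K) →ₗ[K] K) : Finset (ℙ K (Fin 3 → K)) :=
    insert ν (S.filter fun u => χ u.rep = 0)
  have hA (χ : (Fin 3 → K) →ₗ[K] K) (hχ : χ ≠ 0) (hχν : χ ν.rep = 0) (hc : m < (A χ).card) :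
      linForm χ ∣ P := by
    refine linForm_dvd_of_card hχ (S := A χ) ?_ hP ?_ hc
    · simp [A, hχν]
    · simpa [A, hν _ hνφ hνψ] using fun u hu _ => h0 u hu
  have hunion : S.card ≤ (A φ ∪ A ψ).card := Finset.card_le_card fun u hu => by
    rcases hS u hu with h | h <;> simp [A, hu, h]
  have hinter : 0 < (A φ ∩ A ψ).card := Finset.card_pos.2 ⟨ν, by simp [A]⟩
  have hsum := Finset.card_union_add_card_inter (A φ) (A ψ)
  rcases (by omega : m < (A φ).card ∨ m < (A ψ).card) with h | h
  · exact .inl (hA φ hφ hνφ h)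
  · exact .inr (hA ψ hψ hνψ h)

theorem sq_dvd_of_dvd_pderiv [CharZero K] {σ : Type*} [Finite σ] {l P : MvPolynomial σ K} {m : ℕ}
    (hl : l.IsHomogeneous 1) (hl0 : l ≠ 0) (hP : P.IsHomogeneous (m + 1))
    (h : ∀ i, l ∣ pderiv i P) : l ^ 2 ∣ P := by
  obtain ⟨Q, rfl⟩ := dvd_of_dvd_pderiv hP h
  obtain ⟨i, hi⟩ : ∃ i, pderiv i l ≠ 0 := by
    by_contra! hc
    exact hl0 (eq_zero_of_forall_pderiv_eq_zero hl hc)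
  have hQ := h i
  rw [pderiv_mul, dvd_add_left (dvd_mul_right _ _)] at hQ
  rw [pow_two]
  refine mul_dvd_mul_left l (((prime_of_isHomogeneous_one hl hl0).dvd_or_dvd hQ).resolve_left ?_)
  intro hd
  have := le_of_dvd_of_isHomogeneous hl hl.pderiv hi hd
  omega

end CommonComponents

namespace Frame

variable {K : Type*} [Field K] {m : ℕ} (F : Frame K m) {y : K}

theorem dvd_taylorTerm_of_dvd_xi {h : MvPolynomial (Fin m) K} (h₂ : h ∣ F.taylorTerm y 2)
    (hξ : h ∣ F.xi h) {k : ℕ} (hk : 2 ≤ k) : h ∣ F.taylorTerm y k := by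
  induction k, hk using Nat.le_induction with
  | base => exact h₂
  | succ k _ ih =>
    obtain ⟨P, hP⟩ := ih
    rw [taylorTerm, hP, Derivation.leibniz]
    exact (dvd_add (dvd_mul_right _ _) (hξ.mul_left _)).mul_left _

variable [CharZero K]

theorem dvd_xi_taylorTerm_two {h : MvPolynomial (Fin m) K} (h₃ : h ∣ F.taylorTerm y 3) :
    h ∣ F.xi (F.taylorTerm y 2) := by
  rw [xi_taylorTerm]
  exact dvd_smul_of_dvd _ h₃

theorem dvd_xi_of_dvd_taylorTerm_three {l l' : MvPolynomial (Fin m) K}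
    (h₂ : F.taylorTerm y 2 = l * l') (hl : Prime l) (hd : ¬ l ∣ l')
    (h₃ : l ∣ F.taylorTerm y 3) : l ∣ F.xi l := by
  have hξ := F.dvd_xi_taylorTerm_two h₃
  rw [h₂, Derivation.leibniz, smul_eq_mul, dvd_add_right (dvd_mul_right _ _)] at hξ
  exact (hl.dvd_or_dvd hξ).resolve_left hd

theorem dvd_xi_of_taylorTerm_two_eq_mul_sq {l : MvPolynomial (Fin m) K} (hl : l.IsHomogeneous 1)
    (hl0 : l ≠ 0) {a : K} (ha : a ≠ 0) (h₂ : F.taylorTerm y 2 = C a * l ^ 2) : l ∣ F.xi l := by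
  have hsq : l ^ 2 ∣ F.taylorTerm y 3 := by
    refine sq_dvd_of_dvd_pderiv hl hl0 (F.isHomogeneous_taylorTerm y 3) fun i => ?_
    rw [pderiv_taylorTerm_succ, h₂, Derivation.leibniz, Derivation.leibniz_pow]
    exact ⟨C a * (2 * coeffwise (F.D i) l) + l * coeffwise (F.D i) (C a), by simp; ring⟩
  have hξ := F.dvd_xi_taylorTerm_two hsq
  simp only [h₂, Derivation.leibniz, Derivation.leibniz_pow, smul_eq_mul, nsmul_eq_mul, pow_one,
    Nat.add_one_sub_one, Nat.cast_ofNat] at hξ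
  rw [dvd_add_left (dvd_mul_right _ _)] at hξ
  have hunit : IsUnit (C a * 2 : MvPolynomial (Fin m) K) := by
    rw [← map_ofNat C 2, ← C_mul]
    exact (IsUnit.mk0 _ (mul_ne_zero ha two_ne_zero)).map C
  rw [← hunit.dvd_mul_left, ← mul_dvd_mul_iff_left hl0]
  convert hξ using 1 <;> ring

theorem exists_dvd_xi_of_not_irreducible {F : Frame K 3} {S : Finset (ℙ K (Fin 3 → K))}
    (hS₂ : ∀ u ∈ S, eval u.rep (F.taylorTerm y 2) = 0)
    (hS₃ : ∀ u ∈ S, eval u.rep (F.taylorTerm y 3) = 0) (hcard : 6 ≤ S.card)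
    (h0 : F.taylorTerm y 2 ≠ 0) (hirr : ¬ Irreducible (F.taylorTerm y 2)) :
    ∃ l : MvPolynomial (Fin 3) K, l.IsHomogeneous 1 ∧ l ∣ F.taylorTerm y 2 ∧ l ∣ F.xi l := by
  obtain ⟨l, l', hl, hl', hmul⟩ :=
    exists_eq_mul_of_not_irreducible (F.isHomogeneous_taylorTerm y 2) h0 hirr
  have hl0 : l ≠ 0 := left_ne_zero_of_mul (hmul ▸ h0)
  have hl0' : l' ≠ 0 := right_ne_zero_of_mul (hmul ▸ h0)
  have hprime := prime_of_isHomogeneous_one hl hl0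
  have hprime' := prime_of_isHomogeneous_one hl' hl0'
  by_cases hd : l ∣ l'
  · obtain ⟨τ, hτ, rfl⟩ := exists_isHomogeneous_eq_mul (k := 0) hl hl' hd
    obtain ⟨a, rfl⟩ := eq_C_of_isHomogeneous_zero hτ
    have ha : a ≠ 0 := by
      rintro rfl
      exact hl0' (by rw [C_0, mul_zero])
    exact ⟨l, hl, hmul ▸ dvd_mul_right _ _,
      F.dvd_xi_of_taylorTerm_two_eq_mul_sq hl hl0 ha (by rw [hmul]; ring)⟩
  have hd' : ¬ l' ∣ l := fun h => hd ((hprime'.associated_of_dvd hprime h).symm.dvd)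
  obtain ⟨φ, rfl⟩ := exists_eq_linForm hl
  obtain ⟨ψ, rfl⟩ := exists_eq_linForm hl'
  have hν (ν) (hφ : φ ν = 0) (hψ : ψ ν = 0) : eval ν (F.taylorTerm y 3) = 0 := by
    have hξ := congrArg (eval ν) (F.xi_taylorTerm y 2)
    simpa [hmul, eval_linForm, hφ, hψ] using hξ.symm
  rcases linForm_dvd_or_linForm_dvd_of_card (linForm_eq_zero_iff.not.1 hl0)
    (linForm_eq_zero_iff.not.1 hl0') (F.isHomogeneous_taylorTerm y 3) hν
    (fun u hu => by simpa [hmul, eval_linForm] using hS₂ u hu) hS₃ hcard with h₃ | h₃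
  · exact ⟨_, hl, hmul ▸ dvd_mul_right _ _, F.dvd_xi_of_dvd_taylorTerm_three hmul hprime hd h₃⟩
  · exact ⟨_, hl', hmul ▸ dvd_mul_left _ _,
      F.dvd_xi_of_dvd_taylorTerm_three (hmul.trans (mul_comm _ _)) hprime' hd' h₃⟩

theorem exists_dvd_taylorTerm [IsAlgClosed K] {F : Frame K 3} {S : Finset (ℙ K (Fin 3 → K))}
    (hS₂ : ∀ u ∈ S, eval u.rep (F.taylorTerm y 2) = 0)
    (hS₃ : ∀ u ∈ S, eval u.rep (F.taylorTerm y 3) = 0) (hcard : 6 ≤ S.card)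
    (hirr : Irreducible (F.taylorTerm y 2) → 6 < S.card) :
    ∃ (h : MvPolynomial (Fin 3) K) (e : ℕ), h.IsHomogeneous e ∧ e ≠ 0 ∧
      ∀ k, 2 ≤ k → h ∣ F.taylorTerm y k := by
  have hq := F.isHomogeneous_taylorTerm y 2
  by_cases h0 : F.taylorTerm y 2 = 0
  · refine ⟨0, 1, isHomogeneous_zero _ _ _, one_ne_zero, fun k hk => ?_⟩
    exact F.dvd_taylorTerm_of_dvd_xi (by rw [h0]) (by rw [map_zero]) hk
  by_cases hi : Irreducible (F.taylorTerm y 2)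
  · refine ⟨_, 2, hq, two_ne_zero, fun k hk => F.dvd_taylorTerm_of_dvd_xi dvd_rfl ?_ hk⟩
    exact F.dvd_xi_taylorTerm_two
      (conic_dvd_of_card hq hi hS₂ (F.isHomogeneous_taylorTerm y 3) hS₃ (hirr hi))
  · obtain ⟨l, hl, hd, hξ⟩ := exists_dvd_xi_of_not_irreducible hS₂ hS₃ hcard h0 hi
    exact ⟨l, 1, hl, one_ne_zero, fun k hk => F.dvd_taylorTerm_of_dvd_xi hd hξ hk⟩

end Frame

/-! ### The six-line case: leading terms of cubic forms -/

section Dimension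

variable {K : Type*} [Field K]

theorem finrank_homogeneousSubmodule (σ : Type*) [Fintype σ] (n : ℕ) :
    Module.finrank K (homogeneousSubmodule σ K n) = (Fintype.card σ + n - 1).choose n := by
  classical
  have hspan : homogeneousSubmodule σ K n = Submodule.span K (Set.range
      fun d : Finset.finsuppAntidiag (Finset.univ : Finset σ) n =>
        monomial (d : σ →₀ ℕ) (1 : K)) := by
    rw [homogeneousSubmodule_eq_finsupp_supported, AddMonoidAlgebra.supported_eq_span_single]
    congr 1
    ext P
    simp only [Set.mem_image, Set.mem_range, Subtype.exists, Finset.mem_finsuppAntidiag,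
      Finset.subset_univ, and_true, Finsupp.degree_eq_sum, Set.mem_ofPred_eq, exists_prop]
    rfl
  have hli := (basisMonomials σ K).linearIndependent
  rw [coe_basisMonomials] at hli
  rw [hspan]
  exact (finrank_span_eq_card (hli.comp _ Subtype.val_injective)).trans <| by
    rw [Fintype.card_coe, Finset.card_finsuppAntidiag_nat_eq_choose, Finset.card_univ]

instance (σ : Type*) [Finite σ] (n : ℕ) : Module.Finite K (homogeneousSubmodule σ K n) :=
  Module.Finite.iff_fg.2 (homogeneousSubmodule_fg σ K n)

theorem finrank_le_finrank_inf_ker_add {M N : Type*} [AddCommGroup M] [Module K M]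
    [AddCommGroup N] [Module K N] (g : M →ₗ[K] N) {V : Submodule K M} {T : Submodule K N}
    [Module.Finite K V] [Module.Finite K T] (h : V.map g ≤ T) :
    Module.finrank K V ≤ Module.finrank K ↥(V ⊓ LinearMap.ker g) + Module.finrank K T := by
  have hrange : Module.finrank K (LinearMap.range (g.domRestrict V)) ≤ Module.finrank K T := by
    rw [LinearMap.range_domRestrict]
    exact Submodule.finrank_mono h
  have hker : Module.finrank K (LinearMap.ker (g.domRestrict V)) =
      Module.finrank K ↥(V ⊓ LinearMap.ker g) := by
    rw [LinearMap.ker_domRestrict, ← Submodule.finrank_map_subtype_eq, Submodule.map_comap_subtype]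
  have hrn := (g.domRestrict V).finrank_range_add_finrank_ker
  omega

theorem finrank_le_of_forall_exists_eq_mul {A : Type*} [CommRing A] [Algebra K A]
    {T T' : Submodule K A} [Module.Finite K T'] (q : A) (h : ∀ P ∈ T, ∃ τ ∈ T', P = q * τ) :
    Module.finrank K T ≤ Module.finrank K T' := by
  have hle : T ≤ T'.map (LinearMap.mulLeft K q) := fun P hP => by
    obtain ⟨τ, hτ, rfl⟩ := h P hP
    exact ⟨τ, hτ, rfl⟩
  exact (Submodule.finrank_mono hle).trans (Submodule.finrank_map_le _ _)

/-- The forms of degree `m` vanishing on a finite set `S` of points of the plane, evaluated at the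
representatives chosen by `Projectivization.rep`. -/
def vanishing (S : Finset (ℙ K (Fin 3 → K))) (m : ℕ) : Submodule K (MvPolynomial (Fin 3) K) where
  carrier := {P | P.IsHomogeneous m ∧ ∀ u ∈ S, eval u.rep P = 0}
  zero_mem' := ⟨isHomogeneous_zero _ _ _, by simp⟩
  add_mem' h h' := ⟨h.1.add h'.1, fun u hu => by rw [map_add, h.2 u hu, h'.2 u hu, add_zero]⟩
  smul_mem' c P h := ⟨(homogeneousSubmodule (Fin 3) K m).smul_mem c h.1, fun u hu => by
    rw [smul_eval, h.2 u hu, mul_zero]⟩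

instance (S : Finset (ℙ K (Fin 3 → K))) (m : ℕ) : Module.Finite K (vanishing S m) :=
  Submodule.finiteDimensional_of_le
    (show vanishing S m ≤ homogeneousSubmodule (Fin 3) K m from fun _ h => h.1)

theorem finrank_vanishing_le_insert [DecidableEq (ℙ K (Fin 3 → K))] (S : Finset (ℙ K (Fin 3 → K)))
    (m : ℕ) (z : ℙ K (Fin 3 → K)) :
    Module.finrank K (vanishing S m) ≤ Module.finrank K (vanishing (insert z S) m) + 1 := by
  have hle := finrank_le_finrank_inf_ker_add (aeval z.rep).toLinearMap (V := vanishing S m)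
    (T := (⊤ : Submodule K K)) le_top
  rw [finrank_top, Module.finrank_self] at hle
  refine hle.trans (Nat.add_le_add_right (Submodule.finrank_mono fun P hP => ?_) 1)
  refine ⟨hP.1.1, fun u hu => ?_⟩
  rcases Finset.mem_insert.1 hu with rfl | hu
  exacts [hP.2, hP.1.2 u hu]

section Conic

variable [IsAlgClosed K] {q : MvPolynomial (Fin 3) K} (hq : q.IsHomogeneous 2)
  {S : Finset (ℙ K (Fin 3 → K))} (hS : ∀ u ∈ S, eval u.rep q = 0)
include hq hS

theorem exists_finrank_vanishing_le_add (m e : ℕ) :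
    ∃ S' : Finset (ℙ K (Fin 3 → K)), (∀ u ∈ S', eval u.rep q = 0) ∧ S'.card = S.card + e ∧
      Module.finrank K (vanishing S m) ≤ Module.finrank K (vanishing S' m) + e := by
  classical
  induction e with
  | zero => exact ⟨S, hS, rfl, le_rfl⟩
  | succ e ih =>
    obtain ⟨S', hS', hcard, hle⟩ := ih
    obtain ⟨z, hz, hzS⟩ :=
      (infinite_setOf_eval_rep_eq_zero hq two_ne_zero).exists_notMem_finset S'
    refine ⟨insert z S', Finset.forall_mem_insert .. |>.2 ⟨hz, hS'⟩, ?_, ?_⟩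
    · rw [Finset.card_insert_of_notMem hzS, hcard, add_assoc]
    · have := finrank_vanishing_le_insert S' m z
      omega

theorem finrank_vanishing_le_choose (hirr : Irreducible q) (m e : ℕ)
    (hcard : 2 * (m + 2) < S.card + e) :
    Module.finrank K (vanishing S (m + 2)) ≤ (m + 2).choose m + e := by
  obtain ⟨S', hS', hcard', hle⟩ := exists_finrank_vanishing_le_add hq hS (m + 2) e
  have hmul := finrank_le_of_forall_exists_eq_mul (T := vanishing S' (m + 2))
    (T' := homogeneousSubmodule (Fin 3) K m) q fun P hP =>
      exists_isHomogeneous_eq_mul hq (add_comm m 2 ▸ hP.1)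
        (conic_dvd_of_card hq hirr hS' hP.1 hP.2 (by omega))
  rw [finrank_homogeneousSubmodule, Fintype.card_fin, show 3 + m - 1 = m + 2 by omega] at hmul
  omega

end Conic

section Conic

variable {q : MvPolynomial (Fin 3) K} (hq : q.IsHomogeneous 2) (hirr : Irreducible q)
include hq hirr

theorem dvd_of_forall_dvd_mul_pderiv [CharZero K] {τ : MvPolynomial (Fin 3) K}
    (h : ∀ i, q ∣ τ * pderiv i q) : q ∣ τ := by
  obtain ⟨i, hi⟩ : ∃ i, pderiv i q ≠ 0 := by
    by_contra! hc
    exact hirr.ne_zero (eq_zero_of_forall_pderiv_eq_zero hq hc)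
  refine (hirr.prime.dvd_or_dvd (h i)).resolve_right fun hd => ?_
  have := le_of_dvd_of_isHomogeneous hq hq.pderiv hi hd
  omega

theorem eval_eq_zero_of_forall_eval_mul_pderiv [IsAlgClosed K] {u : ℙ K (Fin 3 → K)}
    (hu : eval u.rep q = 0) {τ : MvPolynomial (Fin 3) K}
    (h : ∀ i, eval u.rep (τ * pderiv i q) = 0) : eval u.rep τ = 0 := by
  obtain ⟨i, hi⟩ := exists_eval_pderiv_ne_zero hq hirr hu
  have hτ := h i
  rw [map_mul] at hτ
  exact (mul_eq_zero.1 hτ).resolve_right hi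

end Conic

/-- Spaces `G j` of plane forms of degree `j`, closed under differentiation and vanishing at six
points `S` of an irreducible conic `q` as soon as `4 ≤ j`. The leading terms of the expansions of
cubic forms along a hypersurface with six lines through its base point are of this kind. -/
structure IsSixPointSystem (q : MvPolynomial (Fin 3) K) (S : Finset (ℙ K (Fin 3 → K)))
    (G : ℕ → Submodule K (MvPolynomial (Fin 3) K)) : Prop where
  conic_isHomogeneous : q.IsHomogeneous 2
  conic_irreducible : Irreducible q
  eval_conic : ∀ u ∈ S, eval u.rep q = 0
  card_eq : S.card = 6
  isHomogeneous : ∀ {j P}, P ∈ G j → P.IsHomogeneous j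
  eval_eq_zero : ∀ {j P}, 4 ≤ j → P ∈ G j → ∀ u ∈ S, eval u.rep P = 0
  pderiv_mem : ∀ {j P}, P ∈ G (j + 1) → ∀ i, pderiv i P ∈ G j

namespace IsSixPointSystem

variable [IsAlgClosed K] {q : MvPolynomial (Fin 3) K} {S : Finset (ℙ K (Fin 3 → K))}
  {G : ℕ → Submodule K (MvPolynomial (Fin 3) K)} (h : IsSixPointSystem q S G)
include h

theorem finrank_four_le : Module.finrank K (G 4) ≤ 9 := by
  have hle : G 4 ≤ vanishing S 4 := fun P hP => ⟨h.isHomogeneous hP, h.eval_eq_zero le_rfl hP⟩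
  refine (Submodule.finrank_mono hle).trans ?_
  exact finrank_vanishing_le_choose h.conic_isHomogeneous h.eval_conic h.conic_irreducible 2 3
    (by rw [h.card_eq]; norm_num)

theorem exists_eq_mul_of_mem_five {P : MvPolynomial (Fin 3) K} (hP : P ∈ G 5) :
    ∃ τ ∈ vanishing S 3, P = q * τ := by
  have hvan (i) := h.eval_eq_zero le_rfl (h.pderiv_mem hP i)
  obtain ⟨τ, hτ, rfl⟩ := exists_isHomogeneous_eq_mul (k := 3) h.conic_isHomogeneous
    (h.isHomogeneous hP) (conic_dvd_of_pderiv h.conic_isHomogeneous h.conic_irreducible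
      h.eval_conic (h.isHomogeneous hP) (h.eval_eq_zero (by omega) hP) hvan
      (by rw [h.card_eq]; norm_num))
  refine ⟨τ, ⟨hτ, fun u hu => ?_⟩, rfl⟩
  refine eval_eq_zero_of_forall_eval_mul_pderiv h.conic_isHomogeneous h.conic_irreducible
    (h.eval_conic u hu) fun i => ?_
  have hu' := hvan i u hu
  rw [pderiv_mul, map_add, map_mul, map_mul, h.eval_conic u hu] at hu'
  rw [map_mul]
  linear_combination hu'

theorem finrank_five_le : Module.finrank K (G 5) ≤ 4 :=
  (finrank_le_of_forall_exists_eq_mul q fun _ => h.exists_eq_mul_of_mem_five).trans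
    (finrank_vanishing_le_choose h.conic_isHomogeneous h.eval_conic h.conic_irreducible 1 1
      (by rw [h.card_eq]; norm_num))

variable [CharZero K]

theorem exists_eq_mul_of_mem_six {P : MvPolynomial (Fin 3) K} (hP : P ∈ G 6) :
    ∃ τ ∈ homogeneousSubmodule (Fin 3) K 0, P = q ^ 3 * τ := by
  have hq := h.conic_isHomogeneous
  have hirr := h.conic_irreducible
  choose c hc hPc using fun i => h.exists_eq_mul_of_mem_five (h.pderiv_mem hP i)
  obtain ⟨τ, hτ, rfl⟩ := exists_isHomogeneous_eq_mul (k := 4) hq (h.isHomogeneous hP)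
    (dvd_of_dvd_pderiv (h.isHomogeneous hP) fun i => hPc i ▸ dvd_mul_right _ _)
  have hqτ : q ∣ τ := dvd_of_forall_dvd_mul_pderiv hq hirr fun i => by
    have hi := hPc i
    rw [pderiv_mul] at hi
    exact ⟨c i - pderiv i τ, by linear_combination hi⟩
  obtain ⟨σ, hσ, rfl⟩ := exists_isHomogeneous_eq_mul (k := 2) hq hτ hqτ
  have hc_eq (i) : c i = 2 * (σ * pderiv i q) + q * pderiv i σ := by
    have hi := hPc i
    rw [pderiv_mul, pderiv_mul] at hi
    exact mul_left_cancel₀ hirr.ne_zero (by linear_combination -hi)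
  have hσS (u) (hu : u ∈ S) : eval u.rep σ = 0 := by
    refine eval_eq_zero_of_forall_eval_mul_pderiv hq hirr (h.eval_conic u hu) fun i => ?_
    have hi := (hc i).2 u hu
    rw [hc_eq, map_add, map_mul _ q, h.eval_conic u hu, map_mul, map_ofNat] at hi
    linear_combination hi / 2
  obtain ⟨ρ, hρ, rfl⟩ := exists_isHomogeneous_eq_mul (k := 0) hq hσ
    (conic_dvd_of_card hq hirr h.eval_conic hσ hσS (by rw [h.card_eq]; norm_num))
  exact ⟨ρ, hρ, by ring⟩

theorem finrank_six_le : Module.finrank K (G 6) ≤ 1 := by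
  have hle := finrank_le_of_forall_exists_eq_mul (q ^ 3) fun _ => h.exists_eq_mul_of_mem_six
  rwa [finrank_homogeneousSubmodule] at hle

theorem sum_finrank_le : ∑ j ∈ Finset.range 7, Module.finrank K (G j) ≤ 34 := by
  have hle (j) : Module.finrank K (G j) ≤ (3 + j - 1).choose j := by
    have hGj : G j ≤ homogeneousSubmodule (Fin 3) K j := fun _ hP => h.isHomogeneous hP
    refine (Submodule.finrank_mono hGj).trans (le_of_eq ?_)
    rw [finrank_homogeneousSubmodule, Fintype.card_fin]
  have h0 : _ ≤ 1 := hle 0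
  have h1 : _ ≤ 3 := hle 1
  have h2 : _ ≤ 6 := hle 2
  have h3 : _ ≤ 10 := hle 3
  have h4 := h.finrank_four_le
  have h5 := h.finrank_five_le
  have h6 := h.finrank_six_le
  simp only [Finset.sum_range_succ, Finset.sum_range_zero]
  omega

theorem eq_zero_of_mem_seven {P : MvPolynomial (Fin 3) K} (hP : P ∈ G 7) : P = 0 := by
  have hq := h.conic_isHomogeneous
  have hd (i) : q ^ 3 ∣ pderiv i P := by
    obtain ⟨τ, -, hτ⟩ := h.exists_eq_mul_of_mem_six (h.pderiv_mem hP i)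
    exact hτ ▸ dvd_mul_right _ _
  obtain ⟨l, hl, rfl⟩ := exists_isHomogeneous_eq_mul (k := 1) (hq.pow 3) (h.isHomogeneous hP)
    (dvd_of_dvd_pderiv (h.isHomogeneous hP) hd)
  by_contra h0
  have h3l : q ∣ C 3 * l := dvd_of_forall_dvd_mul_pderiv hq h.conic_irreducible fun i => by
    obtain ⟨c, hc⟩ := hd i
    rw [pderiv_mul, pderiv_pow] at hc
    refine ⟨c - pderiv i l,
      mul_left_cancel₀ (pow_ne_zero 2 h.conic_irreducible.ne_zero) ?_⟩
    rw [map_ofNat]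
    norm_num at hc
    linear_combination hc
  have hl3 : l = C 3⁻¹ * (C 3 * l) := by
    rw [← mul_assoc, ← C_mul, inv_mul_cancel₀ three_ne_zero, C_1, one_mul]
  have := le_of_dvd_of_isHomogeneous hq hl (right_ne_zero_of_mul h0) (hl3 ▸ h3l.mul_left _)
  omega

theorem eq_zero_of_mem_of_seven_le {j : ℕ} (hj : 7 ≤ j) {P : MvPolynomial (Fin 3) K}
    (hP : P ∈ G j) : P = 0 := by
  induction j, hj using Nat.le_induction generalizing P with
  | base => exact h.eq_zero_of_mem_seven hP
  | succ j _ ih =>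
    exact eq_zero_of_forall_pderiv_eq_zero (h.isHomogeneous hP) fun i => ih (h.pderiv_mem hP i)

end IsSixPointSystem

end Dimension

namespace Frame

variable {K σ : Type*} [Field K] [CharZero K] {m : ℕ} (F : Frame K m) (v : σ → K) (d : ℕ)

/-- The coefficient of degree `k` of the expansion of a polynomial at `v`, as a linear map. -/
def jetCoeff (k : ℕ) : MvPolynomial σ K →ₗ[K] MvPolynomial (Fin m) K :=
  (PowerSeries.coeff (R := MvPolynomial (Fin m) K) k).restrictScalars K ∘ₗ (F.jet v).toLinearMap

theorem jetCoeff_apply (k : ℕ) (P : MvPolynomial σ K) :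
    F.jetCoeff v k P = PowerSeries.coeff k (F.jet v P) := rfl

/-- The forms of degree `d` whose expansion at `v` has order at least `j`. -/
def formsOfOrder : ℕ → Submodule K (MvPolynomial σ K)
  | 0 => homogeneousSubmodule σ K d
  | j + 1 => formsOfOrder j ⊓ LinearMap.ker (F.jetCoeff v j)

theorem mem_formsOfOrder {j : ℕ} {P : MvPolynomial σ K} :
    P ∈ F.formsOfOrder v d j ↔ P.IsHomogeneous d ∧ ∀ k < j, F.jetCoeff v k P = 0 := by
  induction j with
  | zero => simp [formsOfOrder]
  | succ j ih =>
    rw [formsOfOrder, Submodule.mem_inf, ih, LinearMap.mem_ker, and_assoc,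
      Nat.forall_lt_succ_right]

/-- The terms of degree `j` of the expansions at `v` of forms of degree `d` that have no terms of
smaller degree. -/
def leading (j : ℕ) : Submodule K (MvPolynomial (Fin m) K) :=
  (F.formsOfOrder v d j).map (F.jetCoeff v j)

variable {v d}

theorem isHomogeneous_of_mem_leading {j : ℕ} {P : MvPolynomial (Fin m) K}
    (hP : P ∈ F.leading v d j) : P.IsHomogeneous j := by
  obtain ⟨Φ, -, rfl⟩ := hP
  exact F.isHomogeneous_coeff_jet v Φ j

/-- Differentiating the expansion of `Φ` amounts, up to sign, to applying a derivation of the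
frame to the coefficients of `Φ`. -/
theorem pderiv_mem_leading {j : ℕ} {P : MvPolynomial (Fin m) K} (hP : P ∈ F.leading v d (j + 1))
    (i : Fin m) : pderiv i P ∈ F.leading v d j := by
  obtain ⟨Φ, hΦ, rfl⟩ := hP
  obtain ⟨hd, h0⟩ := (F.mem_formsOfOrder v d).1 hΦ
  have hcoeff (k) (hk : k ≤ j) : F.jetCoeff v k (coeffwise (F.D i) Φ) =
      -pderiv i (F.jetCoeff v (k + 1) Φ) := by
    have hpd := F.pderiv_coeff_jet v i k Φ
    rw [← jetCoeff_apply, ← jetCoeff_apply, ← jetCoeff_apply, h0 k (by omega), map_zero,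
      zero_sub] at hpd
    rw [hpd, neg_neg]
  rw [← neg_neg (pderiv i _), ← hcoeff j le_rfl, ← map_neg]
  refine Submodule.mem_map_of_mem (neg_mem ((F.mem_formsOfOrder v d).2
    ⟨isHomogeneous_coeffwise _ hd, fun k hk => ?_⟩))
  rw [hcoeff k (by omega), h0 (k + 1) (by omega), map_zero, neg_zero]

theorem jet_eq_zero_of_leading_eq_bot {j : ℕ} {Φ : MvPolynomial σ K}
    (hΦ : Φ ∈ F.formsOfOrder v d j) (h : ∀ k, j ≤ k → F.leading v d k = ⊥) :
    F.jet v Φ = 0 := by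
  have hmem (i : ℕ) : Φ ∈ F.formsOfOrder v d (j + i) := by
    induction i with
    | zero => exact hΦ
    | succ i ih =>
      exact ⟨ih, (Submodule.mem_bot K).1
        (h (j + i) (by omega) ▸ Submodule.mem_map_of_mem ih)⟩
  refine PowerSeries.ext fun k => ?_
  rw [map_zero]
  exact ((F.mem_formsOfOrder v d).1 (hmem (k + 1))).2 k (by omega)

theorem finrank_homogeneousSubmodule_le_add_sum_leading [Finite σ] (j : ℕ) :
    Module.finrank K (homogeneousSubmodule σ K d) ≤ Module.finrank K (F.formsOfOrder v d j) +
      ∑ i ∈ Finset.range j, Module.finrank K (F.leading v d i) := by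
  have hfin (j) : Module.Finite K (F.formsOfOrder v d j) :=
    Submodule.finiteDimensional_of_le (show _ ≤ homogeneousSubmodule σ K d from
      fun _ h => ((F.mem_formsOfOrder v d).1 h).1)
  have : ∀ j, Module.Finite K (F.leading v d j) := fun j =>
    Submodule.finiteDimensional_of_le (show _ ≤ homogeneousSubmodule (Fin m) K j from
      fun _ h => F.isHomogeneous_of_mem_leading h)
  induction j with
  | zero => exact Nat.le_add_right _ _
  | succ j ih =>
    have hj : _ ≤ Module.finrank K (F.formsOfOrder v d (j + 1)) + _ :=
      finrank_le_finrank_inf_ker_add (F.jetCoeff v j) le_rfl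
    rw [Finset.sum_range_succ]
    change _ ≤ _ + Module.finrank K (F.leading v d j) at hj
    omega

section SixLines

variable {F : Frame K 3} {y : K} {f : MvPolynomial (Fin 5) K}
  (hf : F.jet (F.pt y) f = 0) (h0 : eval (F.pt y) (pderiv 0 f) ≠ 0)
include hf h0

theorem isSixPointSystem_leading (hirr : Irreducible (F.taylorTerm y 2))
    {S : Finset (ℙ K (Fin 3 → K))} (hcard : S.card = 6) (hS : ∀ u ∈ S, F.IsLineDir y f u.rep) :
    IsSixPointSystem (F.taylorTerm y 2) S (F.leading (F.pt y) 3) where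
  conic_isHomogeneous := F.isHomogeneous_taylorTerm y 2
  conic_irreducible := hirr
  eval_conic u hu := (hS u hu).eval_taylorTerm_eq_zero F hf h0 le_rfl
  card_eq := hcard
  isHomogeneous hP := F.isHomogeneous_of_mem_leading hP
  eval_eq_zero := by
    rintro j _ hj ⟨Φ, hΦ, rfl⟩ u hu
    exact (hS u hu).eval_coeff_jet_eq_zero F hf h0 ((F.mem_formsOfOrder _ _).1 hΦ).1 hj
  pderiv_mem hP i := F.pderiv_mem_leading hP i

theorem exists_cubic_jet_eq_zero [IsAlgClosed K]
    (hirr : Irreducible (F.taylorTerm y 2)) {S : Finset (ℙ K (Fin 3 → K))} (hcard : S.card = 6)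
    (hS : ∀ u ∈ S, F.IsLineDir y f u.rep) :
    ∃ Φ : MvPolynomial (Fin 5) K, Φ ≠ 0 ∧ Φ.IsHomogeneous 3 ∧ F.jet (F.pt y) Φ = 0 := by
  have hsys := isSixPointSystem_leading hf h0 hirr hcard hS
  have h35 : Module.finrank K (homogeneousSubmodule (Fin 5) K 3) = 35 :=
    finrank_homogeneousSubmodule (Fin 5) 3
  have hne : Module.finrank K (F.formsOfOrder (F.pt y) 3 7) ≠ 0 := by
    have hsum := h35.ge.trans
      (F.finrank_homogeneousSubmodule_le_add_sum_leading (v := F.pt y) 7)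
    have h34 := hsys.sum_finrank_le
    omega
  obtain ⟨Φ, hΦ, hΦ0⟩ := Submodule.exists_mem_ne_zero_of_ne_bot
    (p := F.formsOfOrder (F.pt y) 3 7) fun h => hne (by rw [h, finrank_bot])
  refine ⟨Φ, hΦ0, ((F.mem_formsOfOrder _ _).1 hΦ).1, ?_⟩
  exact F.jet_eq_zero_of_leading_eq_bot hΦ fun k hk =>
    (Submodule.eq_bot_iff _).2 fun _ => hsys.eq_zero_of_mem_of_seven_le hk

end SixLines

/-- The directions `u` of the lines on `f = 0` through `F.pt y`, as points of `ℙ²`. -/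
def lineDirs {m : ℕ} (F : Frame K m) (y : K) (f : MvPolynomial (Fin (m + 2)) K) :
    Set (ℙ K (Fin m → K)) :=
  {u | F.IsLineDir y f u.rep}

section Count

variable [IsAlgClosed K] {F : Frame K 3} {y : K} {f : MvPolynomial (Fin 5) K}
  {n : ℕ} (hhom : f.IsHomogeneous n) (hf : F.jet (F.pt y) f = 0)
include hhom hf

theorem infinite_lineDirs_of_dvd_taylorTerm {h : MvPolynomial (Fin 3) K} {e : ℕ}
    (hh : h.IsHomogeneous e) (he : e ≠ 0)
    (hd : ∀ k, 2 ≤ k → k ≤ n → h ∣ F.taylorTerm y k) : (F.lineDirs y f).Infinite := by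
  refine (infinite_setOf_eval_rep_eq_zero hh he).mono fun u hu => ?_
  refine F.isLineDir_of_taylorTerm hf hhom fun k hk hkn => ?_
  obtain ⟨τ, hτ⟩ := hd k hk hkn
  rw [hτ, map_mul, show eval u.rep h = 0 from hu, zero_mul]

variable (h0 : eval (F.pt y) (pderiv 0 f) ≠ 0) (hfin : (F.lineDirs y f).Finite)
include h0 hfin

theorem irreducible_taylorTerm_two_and_ncard_lineDirs_eq_six (h6 : 6 ≤ (F.lineDirs y f).ncard) :
    Irreducible (F.taylorTerm y 2) ∧ (F.lineDirs y f).ncard = 6 := by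
  by_contra! hne
  rw [Set.ncard_eq_toFinset_card _ hfin] at h6 hne
  have hzero (k) (hk : 2 ≤ k) (u) (hu : u ∈ hfin.toFinset) : eval u.rep (F.taylorTerm y k) = 0 :=
    IsLineDir.eval_taylorTerm_eq_zero F hf h0 (hfin.mem_toFinset.1 hu) hk
  obtain ⟨h, e, hh, he, hd⟩ := exists_dvd_taylorTerm (hzero 2 le_rfl) (hzero 3 (by omega)) h6
    fun hirr => lt_of_le_of_ne h6 (hne hirr).symm
  exact infinite_lineDirs_of_dvd_taylorTerm hhom hf hh he (fun k hk _ => hd k hk) hfin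

theorem ncard_lineDirs_le_six : (F.lineDirs y f).ncard ≤ 6 := by
  by_contra! h6
  exact h6.ne' (irreducible_taylorTerm_two_and_ncard_lineDirs_eq_six hhom hf h0 hfin h6.le).2

theorem eq_three_of_ncard_lineDirs_eq_six (hirr : Irreducible f) (hdeg : f.degreeOf 0 ≠ 0)
    (h6 : (F.lineDirs y f).ncard = 6) : n = 3 := by
  refine le_antisymm ?_ ?_
  · have hq := (irreducible_taylorTerm_two_and_ncard_lineDirs_eq_six hhom hf h0 hfin h6.ge).1
    obtain ⟨Φ, hΦ0, hΦ, hjet⟩ := exists_cubic_jet_eq_zero hf h0 hq (S := hfin.toFinset)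
      (by rw [← Set.ncard_eq_toFinset_card _ hfin, h6]) fun u hu => hfin.mem_toFinset.1 hu
    exact le_of_dvd_of_isHomogeneous hhom hΦ hΦ0
      (F.dvd_of_jet_eq_zero hhom hΦ hirr hdeg hf hjet)
  · by_contra! hn
    refine infinite_lineDirs_of_dvd_taylorTerm hhom hf (F.isHomogeneous_taylorTerm y 2)
      two_ne_zero (fun k hk hkn => ?_) hfin
    rw [show k = 2 by omega]

end Count

end Frame

/-! ### Passage to points and lines of `ℙ⁴` -/

theorem degreeOf_ne_zero_of_pderiv_ne_zero {R σ : Type*} [CommSemiring R] {f : MvPolynomial σ R}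
    {i : σ} (h : pderiv i f ≠ 0) : f.degreeOf i ≠ 0 :=
  mem_vars_iff_degreeOf_ne_zero.1 (not_imp_comm.1 pderiv_eq_zero_of_notMem_vars h)

namespace Frame

section GenericPoint

variable {K : Type*} [Field K] [CharZero K] {m : ℕ}

theorem IsConst.jet_eq_zero {F : Frame K m} {σ : Type*} {v : σ → K} {P : MvPolynomial σ K}
    (hP : F.IsConst P) (h0 : eval v P = 0) : F.jet v P = 0 := by
  rw [hP.jet_eq_taylor, h0, map_zero]

theorem IsConst.eval_cons_one_p_ne_zero {F : Frame K m} {P : MvPolynomial (Fin (m + 1)) K} {k : ℕ}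
    (hP : F.IsConst P) (hhom : P.IsHomogeneous k) (h0 : P ≠ 0) :
    eval (Fin.cons 1 F.p : Fin (m + 1) → K) P ≠ 0 :=
  fun h => h0 (F.eq_zero_of_jet_cons_one hhom (hP.jet_eq_zero h))

variable {f : MvPolynomial (Fin (m + 2)) K} {n : ℕ}

theorem IsConst.exists_eval_pt_eq_zero [IsAlgClosed K] {F : Frame K m} (hf : F.IsConst f)
    (hhom : f.IsHomogeneous n) (hdeg : f.degreeOf 0 ≠ 0) : ∃ y, eval (F.pt y) f = 0 := by
  have hdeg' : (finSuccEquiv K (m + 1) f).natDegree ≠ 0 := by rwa [natDegree_finSuccEquiv]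
  let b := (finSuccEquiv K (m + 1) f).leadingCoeff
  have hb : b ≠ 0 := Polynomial.leadingCoeff_ne_zero.2 (Polynomial.ne_zero_of_natDegree_gt
    (Nat.pos_of_ne_zero hdeg'))
  have hbconst : F.IsConst b := fun i l => by
    rw [show b = (finSuccEquiv K (m + 1) f).coeff _ from rfl, finSuccEquiv_coeff_coeff]
    exact hf i _
  have hbhom : b.IsHomogeneous (n - (finSuccEquiv K (m + 1) f).natDegree) := by
    refine hhom.finSuccEquiv_coeff_isHomogeneous _ _ (Nat.add_sub_of_le ?_)
    rw [natDegree_finSuccEquiv]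
    exact (degreeOf_le_totalDegree f 0).trans hhom.totalDegree_le
  obtain ⟨y, hy⟩ := IsAlgClosed.exists_root
    (Polynomial.map (eval (Fin.cons 1 F.p : Fin (m + 1) → K)) (finSuccEquiv K (m + 1) f)) (by
      rw [Polynomial.degree_map_eq_of_leadingCoeff_ne_zero _
        (hbconst.eval_cons_one_p_ne_zero hbhom hb)]
      exact fun h => hdeg' (Polynomial.natDegree_eq_zero_iff_degree_le_zero.2 h.le))
  exact ⟨y, by rwa [pt, eval_eq_eval_mv_eval']⟩

theorem exists_forall_eval_pt_ne_zero [IsAlgClosed K] (hK : Cardinal.aleph0 < Cardinal.mk K)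
    (hhom : f.IsHomogeneous n) (hirr : Irreducible f) (hdeg : f.degreeOf 0 ≠ 0)
    (G : Finset (MvPolynomial (Fin (m + 2)) K))
    (hG : ∀ g ∈ G, (∃ k, g.IsHomogeneous k) ∧ ¬ f ∣ g) :
    ∃ (F : Frame K m) (y : K), F.jet (F.pt y) f = 0 ∧ ∀ g ∈ G, eval (F.pt y) g ≠ 0 := by
  obtain ⟨F, hF⟩ := exists_frame hK m
    (s := Set.range (fun l => coeff l f) ∪ ⋃ g ∈ G, Set.range fun l => coeff l g)
    ((Set.countable_range _).union
      (G.countable_toSet.biUnion fun g _ => Set.countable_range fun l => coeff l g))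
  have hFf : F.IsConst f := fun i l => hF i _ (.inl ⟨l, rfl⟩)
  have hFG (g) (hg : g ∈ G) : F.IsConst g := fun i l =>
    hF i _ (.inr (Set.mem_biUnion hg ⟨l, rfl⟩))
  obtain ⟨y, hy⟩ := hFf.exists_eval_pt_eq_zero hhom hdeg
  have hjet := hFf.jet_eq_zero hy
  refine ⟨F, y, hjet, fun g hg h0 => ?_⟩
  obtain ⟨⟨k, hk⟩, hfg⟩ := hG g hg
  exact hfg (F.dvd_of_jet_eq_zero hhom hk hirr hdeg hjet ((hFG g hg).jet_eq_zero h0))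

end GenericPoint

end Frame

section Planes

variable {K σ : Type*} [Field K] {f : MvPolynomial σ K} {v : σ → K}

/-- The lines through the point `v` on the projective hypersurface `f = 0`, as planes in the
affine cone over it. -/
def planesThrough (f : MvPolynomial σ K) (v : σ → K) : Set (Submodule K (σ → K)) :=
  {W | Module.finrank K W = 2 ∧ v ∈ W ∧ ∀ w ∈ W, eval w f = 0}

theorem bijOn_map_planesThrough (e : Equiv.Perm σ) :
    Set.BijOn (Submodule.map (LinearEquiv.funCongrLeft K K e).toLinearMap)
      (planesThrough (rename e f) v) (planesThrough f (v ∘ e)) := by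
  let φ := LinearEquiv.funCongrLeft K K e
  refine (Submodule.orderIsoMapComap φ).toEquiv.bijOn fun W => ?_
  refine and_congr (by rw [← φ.finrank_map_eq W]; rfl)
    (and_congr φ.injective.mem_set_image (Set.forall_mem_image.trans ?_))
  simp only [eval_rename, SetLike.mem_coe]
  rfl

end Planes

namespace Frame

variable {K : Type*} [Field K] {m : ℕ} (F : Frame K m) (y : K)

/-- The tangent vector `(∑ i, u i * D i y, 0, u)` at `F.pt y` over the direction `u`. -/
def tangentVec (u : Fin m → K) : Fin (m + 2) → K := dir (eval u (F.taylorTerm y 1)) u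

/-- The plane, in the affine cone, of the line through `F.pt y` with direction `u`. -/
def linePlane (u : Fin m → K) : Submodule K (Fin (m + 2) → K) :=
  Submodule.span K {F.pt y, F.tangentVec y u}

theorem tangentVec_smul (c : K) (u : Fin m → K) :
    F.tangentVec y (c • u) = c • F.tangentVec y u := by
  rw [tangentVec, eval_smul_of_isHomogeneous (F.isHomogeneous_taylorTerm y 1), pow_one]
  ext i
  refine Fin.cases ?_ (Fin.cases ?_ fun i => ?_) i <;> simp [tangentVec, dir]

theorem linePlane_smul {c : K} (hc : c ≠ 0) (u : Fin m → K) :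
    F.linePlane y (c • u) = F.linePlane y u := by
  rw [linePlane, linePlane, tangentVec_smul, Submodule.span_insert, Submodule.span_insert,
    Submodule.span_singleton_smul_eq (IsUnit.mk0 c hc)]

theorem linePlane_rep_mk {u : Fin m → K} (hu : u ≠ 0) :
    F.linePlane y (Projectivization.mk K u hu).rep = F.linePlane y u := by
  obtain ⟨a, ha⟩ := Projectivization.exists_smul_eq_mk_rep K u hu
  rw [← ha, Units.smul_def, F.linePlane_smul y a.ne_zero]

theorem pt_mem_linePlane (u : Fin m → K) : F.pt y ∈ F.linePlane y u :=
  Submodule.subset_span (Set.mem_insert _ _)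

theorem linearIndependent_pt_tangentVec {u : Fin m → K} (hu : u ≠ 0) :
    LinearIndependent K ![F.pt y, F.tangentVec y u] := by
  refine LinearIndependent.pair_iff.2 fun a b hab => ?_
  have ha : a = 0 := by simpa [tangentVec, dir, pt] using congrFun hab 1
  refine ⟨ha, by_contra fun hb => hu (funext fun i => ?_)⟩
  simpa [tangentVec, dir, ha, hb] using congrFun hab i.succ.succ

theorem finrank_linePlane {u : Fin m → K} (hu : u ≠ 0) :
    Module.finrank K (F.linePlane y u) = 2 := by
  rw [linePlane, ← Matrix.range_cons_cons_empty,
    finrank_span_eq_card (F.linearIndependent_pt_tangentVec y hu), Fintype.card_fin]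

theorem exists_eq_smul_of_linePlane_le {u v : Fin m → K} (h : F.linePlane y u ≤ F.linePlane y v) :
    ∃ c : K, u = c • v := by
  obtain ⟨a, b, hab⟩ := Submodule.mem_span_pair.1
    (h (Submodule.subset_span (Set.mem_insert_of_mem _ rfl)))
  have ha : a = 0 := by simpa [tangentVec, dir, pt] using congrFun hab 1
  refine ⟨b, funext fun i => ?_⟩
  simpa [tangentVec, dir, ha, eq_comm] using congrFun hab i.succ.succ

section SmoothPoint

variable [CharZero K] {F y} {f : MvPolynomial (Fin (m + 2)) K} {n : ℕ} (hhom : f.IsHomogeneous n)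
  (hf : F.jet (F.pt y) f = 0) (h0 : eval (F.pt y) (pderiv 0 f) ≠ 0)
include hf h0

theorem exists_linePlane_eq {W : Submodule K (Fin (m + 2) → K)}
    (hW : W ∈ planesThrough f (F.pt y)) : ∃ u ≠ 0, F.linePlane y u = W := by
  obtain ⟨hrank, hpt, hvan⟩ := hW
  obtain ⟨⟨d, hdW⟩, hd, hd0⟩ := Submodule.exists_mem_ne_zero_of_ne_bot
    (LinearMap.ker_ne_bot_of_finrank_lt (f := LinearMap.proj 1 ∘ₗ W.subtype)
      (by rw [hrank, Module.finrank_self]; exact one_lt_two))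
  have hd1 : d 1 = 0 := hd
  let u : Fin m → K := fun i => d i.succ.succ
  have hdir : d = dir (d 0) u := by
    ext i
    refine Fin.cases ?_ (Fin.cases ?_ fun i => ?_) i <;> simp [dir, u, hd1]
  have htan : F.tangentVec y u = d := by
    rw [tangentVec, ← F.eq_eval_taylorTerm_one hf h0 fun t => ?_, ← hdir]
    rw [← hdir]
    exact hvan _ (W.add_mem hpt (W.smul_mem t hdW))
  have hu : u ≠ 0 := fun hu => hd0 <| Subtype.ext <| htan.symm.trans <| by
    rw [hu, ← zero_smul K (0 : Fin m → K), tangentVec_smul, zero_smul, W.coe_zero]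
  have : Module.Finite K W := Module.finite_of_finrank_eq_succ hrank
  refine ⟨u, hu, Submodule.eq_of_le_of_finrank_eq (Submodule.span_le.2 ?_)
    ((F.finrank_linePlane y hu).trans hrank.symm)⟩
  rw [htan]
  exact Set.pair_subset hpt hdW

include hhom

theorem isLineDir_iff_forall_mem_linePlane {u : Fin m → K} :
    F.IsLineDir y f u ↔ ∀ v ∈ F.linePlane y u, eval v f = 0 := by
  refine ⟨?_, fun h => ⟨_, fun t => h _ (Submodule.mem_span_pair.2 ⟨1, t, by
    rw [one_smul, tangentVec]⟩)⟩⟩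
  rintro ⟨w, hw⟩ v hv
  obtain ⟨a, b, rfl⟩ := Submodule.mem_span_pair.1 hv
  obtain rfl := F.eq_eval_taylorTerm_one hf h0 hw
  exact eval_smul_add_smul_eq_zero hhom hw a b

theorem bijOn_linePlane : Set.BijOn (fun u : ℙ K (Fin m → K) => F.linePlane y u.rep)
    (F.lineDirs y f) (planesThrough f (F.pt y)) := by
  refine ⟨fun u hu => ⟨F.finrank_linePlane y u.rep_nonzero, F.pt_mem_linePlane y _,
    (isLineDir_iff_forall_mem_linePlane hhom hf h0).1 hu⟩, fun u _ v _ h => ?_, fun W hW => ?_⟩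
  · obtain ⟨c, hc⟩ := F.exists_eq_smul_of_linePlane_le y (le_of_eq h)
    exact eq_of_rep_eq_smul_rep hc
  · obtain ⟨u, hu, rfl⟩ := exists_linePlane_eq hf h0 hW
    refine ⟨Projectivization.mk K u hu, (isLineDir_iff_forall_mem_linePlane hhom hf h0).2 ?_,
      F.linePlane_rep_mk y hu⟩
    rw [F.linePlane_rep_mk y hu]
    exact hW.2.2

end SmoothPoint

end Frame

section ProjectiveSpace

variable {f g : MvPolynomial (Fin 5) ℂ} {n : ℕ} {x : P4} {v : Fin 5 → ℂ}
  {W : Submodule ℂ (Fin 5 → ℂ)}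

theorem mem_projSet_iff (hx : x.submodule = ℂ ∙ v) : x ∈ projSet W ↔ v ∈ W := by
  change x.submodule ≤ W ↔ _
  rw [hx, Submodule.span_singleton_le_iff_mem]

theorem mem_zeroLocusP_iff (hf : f.IsHomogeneous n) (hx : x.submodule = ℂ ∙ v) :
    x ∈ zeroLocusP f ↔ eval v f = 0 := by
  change (∀ w ∈ x.submodule, _) ↔ _
  rw [hx]
  refine ⟨fun h => h v (Submodule.mem_span_singleton_self v), fun h w hw => ?_⟩
  obtain ⟨c, rfl⟩ := Submodule.mem_span_singleton.1 hw
  rw [eval_smul_of_isHomogeneous hf, h, mul_zero]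

theorem projSet_injective : Function.Injective projSet := by
  refine fun W W' h => SetLike.ext fun v => ?_
  by_cases hv : v = 0
  · simp only [hv, zero_mem]
  · have hx := Projectivization.submodule_mk (K := ℂ) v hv
    rw [← mem_projSet_iff hx, h, mem_projSet_iff hx]

theorem projSet_subset_zeroLocusP_iff (hW : W ≠ ⊥) :
    projSet W ⊆ zeroLocusP f ↔ ∀ w ∈ W, eval w f = 0 := by
  refine ⟨fun h w hw => ?_, fun h x hx w hw => h w (hx hw)⟩
  obtain ⟨u, hu, hu0, hwu⟩ : ∃ u ∈ W, u ≠ 0 ∧ w ∈ ℂ ∙ u := by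
    by_cases hw0 : w = 0
    · obtain ⟨u, hu, hu0⟩ := W.exists_mem_ne_zero_of_ne_bot hW
      exact ⟨u, hu, hu0, hw0 ▸ zero_mem _⟩
    · exact ⟨w, hw, hw0, Submodule.mem_span_singleton_self w⟩
  exact h ((mem_projSet_iff (Projectivization.submodule_mk u hu0)).2 hu) w hwu

theorem bijOn_projSet (hx : x.submodule = ℂ ∙ v) :
    Set.BijOn projSet (planesThrough f v) {L | IsLine L ∧ x ∈ L ∧ L ⊆ zeroLocusP f} := by
  have hbot {W : Submodule ℂ (Fin 5 → ℂ)} (hW : Module.finrank ℂ W = 2) : W ≠ ⊥ := by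
    rintro rfl
    simp at hW
  refine ⟨fun W hW => ⟨⟨W, hW.1, rfl⟩, (mem_projSet_iff hx).2 hW.2.1,
    (projSet_subset_zeroLocusP_iff (hbot hW.1)).2 hW.2.2⟩, projSet_injective.injOn, ?_⟩
  rintro _ ⟨⟨W, hW, rfl⟩, hxW, hWf⟩
  exact ⟨W, ⟨hW, (mem_projSet_iff hx).1 hxW, (projSet_subset_zeroLocusP_iff (hbot hW)).1 hWf⟩, rfl⟩

theorem not_dvd_of_notMem_zeroLocusP (hx : x ∈ zeroLocusP f) (hg : x ∉ zeroLocusP g) :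
    ¬ f ∣ g := by
  rintro ⟨q, rfl⟩
  exact hg fun v hv => by rw [map_mul, hx v hv, zero_mul]

theorem exists_finset_of_isOpen {W : Set P4} (hW : zariskiP4.IsOpen W) (hx : x ∈ W) :
    ∃ G : Finset (MvPolynomial (Fin 5) ℂ), (∀ g ∈ G, ∃ k, g.IsHomogeneous k) ∧
      (∀ g ∈ G, x ∉ zeroLocusP g) ∧ ∀ x', (∀ g ∈ G, x' ∉ zeroLocusP g) → x' ∈ W := by
  classical
  induction hW with
  | basic s hs =>
    obtain ⟨k, g, hg, rfl⟩ := hs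
    exact ⟨{g}, by simpa using ⟨k, hg⟩, by simpa using hx, by simp⟩
  | univ => exact ⟨∅, by simp, by simp, by simp⟩
  | inter s t _ _ hs ht =>
    obtain ⟨G, hG, hxG, hGs⟩ := hs hx.1
    obtain ⟨G', hG', hxG', hGt⟩ := ht hx.2
    refine ⟨G ∪ G', Finset.forall_mem_union.2 ⟨hG, hG'⟩, Finset.forall_mem_union.2 ⟨hxG, hxG'⟩,
      fun x' h => ?_⟩
    exact ⟨hGs x' (Finset.forall_mem_union.1 h).1, hGt x' (Finset.forall_mem_union.1 h).2⟩
  | sUnion S _ ih =>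
    obtain ⟨s, hs, hxs⟩ := hx
    obtain ⟨G, hG, hxG, hGs⟩ := ih s hs hxs
    exact ⟨G, hG, hxG, fun x' h => ⟨s, hs, hGs x' h⟩⟩

end ProjectiveSpace

/-- A presentation of `x` as a generic point of `f = 0` at which the first coordinate is a smooth
algebraic function of the last three: after permuting the coordinates by `σ`, the point is
`(y, 1, p)` for a frame with independent coordinates `p`. -/
structure Chart (f : MvPolynomial (Fin 5) ℂ) (x : P4) where
  σ : Equiv.Perm (Fin 5)
  frame : Frame ℂ 3
  y : ℂ
  submodule_eq : x.submodule = ℂ ∙ (frame.pt y ∘ σ)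
  jet_eq_zero : frame.jet (frame.pt y) (rename σ f) = 0
  eval_pderiv_ne_zero : eval (frame.pt y) (pderiv 0 (rename σ f)) ≠ 0

namespace Chart

variable {f : MvPolynomial (Fin 5) ℂ} {n : ℕ} {x : P4}

theorem degreeOf_ne_zero (c : Chart f x) : (rename c.σ f).degreeOf 0 ≠ 0 :=
  degreeOf_ne_zero_of_pderiv_ne_zero fun h => c.eval_pderiv_ne_zero (by rw [h, map_zero])

theorem mem_zeroLocusP (c : Chart f x) (hhom : f.IsHomogeneous n) : x ∈ zeroLocusP f := by
  rw [mem_zeroLocusP_iff hhom c.submodule_eq, ← eval_rename, ← C_eq_zero (σ := Fin 3),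
    ← c.frame.coeff_zero_jet, c.jet_eq_zero, map_zero]

theorem exists_bijOn_lineDirs (c : Chart f x) (hhom : f.IsHomogeneous n) :
    ∃ φ, Set.BijOn φ (c.frame.lineDirs c.y (rename c.σ f))
      {L | IsLine L ∧ x ∈ L ∧ L ⊆ zeroLocusP f} :=
  ⟨_, (bijOn_projSet c.submodule_eq).comp <| (bijOn_map_planesThrough c.σ).comp <|
    Frame.bijOn_linePlane hhom.rename_isHomogeneous c.jet_eq_zero c.eval_pderiv_ne_zero⟩

end Chart

section Rename

variable {K σ : Type*} [Field K] {f : MvPolynomial σ K} {n : ℕ}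

theorem irreducible_rename_equiv_iff {τ : Type*} (e : σ ≃ τ) :
    Irreducible (rename e f) ↔ Irreducible f :=
  MulEquiv.irreducible_iff (renameEquiv K e)

theorem exists_perm_pderiv_rename_ne_zero [CharZero K] [Finite σ]
    (hhom : f.IsHomogeneous n) (hn : n ≠ 0) (h0 : f ≠ 0) (j : σ) :
    ∃ e : Equiv.Perm σ, pderiv j (rename e f) ≠ 0 := by
  classical
  obtain ⟨m, rfl⟩ := Nat.exists_eq_succ_of_ne_zero hn
  obtain ⟨i, hi⟩ : ∃ i, pderiv i f ≠ 0 :=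
    not_forall.1 fun h => h0 (eq_zero_of_forall_pderiv_eq_zero hhom h)
  have hrename := pderiv_rename (Equiv.swap i j).injective i f
  rw [Equiv.swap_apply_left] at hrename
  exact ⟨Equiv.swap i j,
    hrename ▸ (map_ne_zero_iff _ (rename_injective _ (Equiv.injective _))).2 hi⟩

end Rename

section GenericPoint

variable {f : MvPolynomial (Fin 5) ℂ} {n : ℕ} (hhom : f.IsHomogeneous n) (hirr : Irreducible f)
include hhom hirr

theorem exists_chart_of_finset (G : Finset (MvPolynomial (Fin 5) ℂ))
    (hG : ∀ g ∈ G, (∃ k, g.IsHomogeneous k) ∧ ¬ f ∣ g) :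
    ∃ x : P4, Nonempty (Chart f x) ∧ ∀ g ∈ G, x ∉ zeroLocusP g := by
  classical
  have hn : n ≠ 0 := hhom.totalDegree hirr.ne_zero ▸
    totalDegree_ne_zero_of_not_isUnit hirr.ne_zero hirr.not_isUnit
  obtain ⟨σ, hσ⟩ := exists_perm_pderiv_rename_ne_zero hhom hn hirr.ne_zero 0
  have hhom' : (rename σ f).IsHomogeneous n := hhom.rename_isHomogeneous
  have hpderiv : ¬ rename σ f ∣ pderiv 0 (rename σ f) := fun h => by
    have hle := le_of_dvd_of_isHomogeneous hhom' hhom'.pderiv hσ h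
    omega
  obtain ⟨F, y, hjet, hGF⟩ := Frame.exists_forall_eval_pt_ne_zero (m := 3)
    (by rw [Cardinal.mk_complex]; exact Cardinal.aleph0_lt_continuum) hhom'
    ((irreducible_rename_equiv_iff σ).2 hirr) (degreeOf_ne_zero_of_pderiv_ne_zero hσ)
    (insert (pderiv 0 (rename σ f)) (G.image (rename σ))) <| by
      refine (Finset.forall_mem_insert _ _ _).2 ⟨⟨⟨_, hhom'.pderiv⟩, hpderiv⟩,
        Finset.forall_mem_image.2 fun g hg => ⟨?_, fun h => (hG g hg).2 ?_⟩⟩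
      · exact (hG g hg).1.imp fun k hk => hk.rename_isHomogeneous
      · exact (map_dvd_iff (renameEquiv ℂ σ)).1 h
  obtain ⟨hF, hGF⟩ := (Finset.forall_mem_insert _ _ _).1 hGF
  have hpt : F.pt y ∘ σ ≠ 0 := fun h => by
    simpa [Frame.pt] using congrFun h (σ.symm 1)
  have hx := Projectivization.submodule_mk (K := ℂ) _ hpt
  refine ⟨_, ⟨⟨σ, F, y, hx, hjet, hF⟩⟩, fun g hg => ?_⟩
  obtain ⟨k, hk⟩ := (hG g hg).1
  rw [mem_zeroLocusP_iff hk hx, ← eval_rename]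
  exact Finset.forall_mem_image.1 hGF hg

theorem exists_chart_mem {U : Set P4} (hU : GenericInT zariskiP4 (zeroLocusP f) U) :
    ∃ x ∈ U, Nonempty (Chart f x) := by
  obtain ⟨-, ⟨W, hW, rfl⟩, hdense⟩ := hU
  obtain ⟨x₀, ⟨c₀⟩, -⟩ := exists_chart_of_finset hhom hirr ∅ (by simp)
  obtain ⟨x₁, ⟨hx₁, hx₁W⟩, -⟩ := hdense Set.univ (@isOpen_univ _ zariskiP4)
    ⟨x₀, c₀.mem_zeroLocusP hhom, trivial⟩
  obtain ⟨G, hG, hG₁, hGW⟩ := exists_finset_of_isOpen hW hx₁W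
  obtain ⟨x, ⟨c⟩, hxG⟩ := exists_chart_of_finset hhom hirr G fun g hg =>
    ⟨hG g hg, not_dvd_of_notMem_zeroLocusP hx₁ (hG₁ g hg)⟩
  exact ⟨x, ⟨c.mem_zeroLocusP hhom, hGW x hxG⟩, ⟨c⟩⟩

end GenericPoint

end GeneralLines

/-- Landsberg / Segre.  Let `X = {f = 0} ⊂ ℙ⁴` be an
integral hypersurface (with `f` a nonzero irreducible homogeneous polynomial)
such that through a general point of `X` — i.e. through every point of a
dense (relatively) Zariski-open subset `U` of `X` — there pass only finitely
many lines contained in `X`, this number being constant equal to `d` on `U`.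
Then `d ≤ 6`, and if `d = 6` then `X` is a (not necessarily smooth) cubic. -/
theorem lines_through_general_point_le_six
    (f : MvPolynomial (Fin 5) ℂ) (n : ℕ)
    (hhom : f.IsHomogeneous n) (hne : f ≠ 0) (hirr : Irreducible f)
    (d : ℕ) (U : Set P4)
    (hU : GenericInT zariskiP4 (zeroLocusP f) U)
    (hd : ∀ x ∈ U,
      {L : Set P4 | IsLine L ∧ x ∈ L ∧ L ⊆ zeroLocusP f}.Finite ∧
      {L : Set P4 | IsLine L ∧ x ∈ L ∧ L ⊆ zeroLocusP f}.ncard = d) :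
    d ≤ 6 ∧ (d = 6 → n = 3) := by
  obtain ⟨x, hxU, ⟨c⟩⟩ := GeneralLines.exists_chart_mem hhom hirr hU
  obtain ⟨hfin, rfl⟩ := hd x hxU
  obtain ⟨φ, hφ⟩ := c.exists_bijOn_lineDirs hhom
  have hhom' := hhom.rename_isHomogeneous (f := c.σ)
  have hirr' := (GeneralLines.irreducible_rename_equiv_iff c.σ).2 hirr
  have hfin' := hφ.finite_iff_finite.2 hfin
  rw [← hφ.ncard_eq]
  exact ⟨GeneralLines.Frame.ncard_lineDirs_le_six hhom' c.jet_eq_zero c.eval_pderiv_ne_zero hfin',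
    GeneralLines.Frame.eq_three_of_ncard_lineDirs_eq_six hhom' c.jet_eq_zero c.eval_pderiv_ne_zero
      hfin' hirr' c.degreeOf_ne_zero⟩
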